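/- arXiv:2110.10146 — 3 statements merged into one kernel-verified Lean document; each statement's English description precedes it below -/
import Mathlib

section
/- For every fixed real h ≥ 0, the limit as k → ∞ of f(N_k, h) equals 1. -/
open MeasureTheory Real

/-- The prime zeta function `P(s) = ∑_p p^{-s}` (sum over all primes). -/
noncomputable def primeZeta (s : ℝ) : ℝ := ∑' p : Nat.Primes, (p.1 : ℝ) ^ (-s)

/-- The set of `k`-almost primes: positive integers with exactly `k` prime
factors counted with multiplicity. -/
def almostPrimes (k : ℕ) : Set ℕ := {n | 0 < n ∧ n.primeFactorsList.length = k}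

/-- `P_k(s) = ∑_{n ∈ N_k} n^{-s}`; note `P_0(s) = 1` since `N_0 = {1}`. -/
noncomputable def Pk (k : ℕ) (s : ℝ) : ℝ := ∑' n : almostPrimes k, (n.1 : ℝ) ^ (-s)

/-- Translated sum `f(A, h) = ∑_{a ∈ A} 1/(a (log a + h))`. -/
noncomputable def transSum (A : Set ℕ) (h : ℝ) : ℝ :=
  ∑' a : A, 1 / ((a.1 : ℝ) * (Real.log a.1 + h))

/-- solution of the logarithmic-derivative recursion -/
noncomputable def Rsol (g : ℕ → ℝ) : ℕ → ℝ
  | 0 => 1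
  | n + 1 => (∑ i : Fin (n + 1), g (n - i.1) * Rsol g i.1) / (n + 1)
termination_by n => n
decreasing_by exact i.2

lemma Rsol_zero (g : ℕ → ℝ) : Rsol g 0 = 1 := by rw [Rsol]

lemma Rsol_succ (g : ℕ → ℝ) (n : ℕ) :
    Rsol g (n + 1) = (∑ i ∈ Finset.range (n + 1), g (n - i) * Rsol g i) / (n + 1) := by
  rw [Rsol, Finset.sum_range]

lemma Rsol_unique (g : ℕ → ℝ) (X : ℕ → ℝ) (h0 : X 0 = 1)
    (hs : ∀ n : ℕ, ((n : ℝ) + 1) * X (n + 1) = ∑ i ∈ Finset.range (n + 1), g (n - i) * X i) (n : ℕ) :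
    X n = Rsol g n := by
  induction n using Nat.strong_induction_on with
  | _ n ih =>
    cases n with
    | zero => rw [h0, Rsol_zero]
    | succ n =>
      rw [Rsol_succ, eq_div_iff (by positivity), mul_comm, hs]
      refine Finset.sum_congr rfl fun i hi => ?_
      rw [ih i (Finset.mem_range.1 hi)]

lemma Rsol_nonneg (g : ℕ → ℝ) (hg : ∀ m, 0 ≤ g m) (n : ℕ) : 0 ≤ Rsol g n := by
  induction n using Nat.strong_induction_on with
  | _ n ih =>
    cases n with
    | zero => rw [Rsol_zero]; norm_num
    | succ n =>
      rw [Rsol_succ]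
      refine div_nonneg (Finset.sum_nonneg fun i hi => ?_) (by positivity)
      exact mul_nonneg (hg _) (ih i (Finset.mem_range.1 hi))

lemma Rsol_mono (g g' : ℕ → ℝ) (hg : ∀ m, 0 ≤ g m) (hgg : ∀ m, g m ≤ g' m) (n : ℕ) :
    Rsol g n ≤ Rsol g' n := by
  induction n using Nat.strong_induction_on with
  | _ n ih =>
    cases n with
    | zero => rw [Rsol_zero, Rsol_zero]
    | succ n =>
      rw [Rsol_succ, Rsol_succ]
      refine div_le_div_of_nonneg_right (Finset.sum_le_sum fun i hi => ?_) (by positivity)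
      exact mul_le_mul (hgg _) (ih i (Finset.mem_range.1 hi)) (Rsol_nonneg g hg i)
        ((hg _).trans (hgg _))

lemma Rsol_tendsto {α : Type*} {l : Filter α} (g : α → ℕ → ℝ) (g' : ℕ → ℝ)
    (hg : ∀ m, Filter.Tendsto (fun x => g x m) l (nhds (g' m))) (n : ℕ) :
    Filter.Tendsto (fun x => Rsol (g x) n) l (nhds (Rsol g' n)) := by
  induction n using Nat.strong_induction_on with
  | _ n ih =>
    cases n with
    | zero => simp only [Rsol_zero]; exact tendsto_const_nhds
    | succ n =>
      simp only [Rsol_succ]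
      refine Filter.Tendsto.div_const (tendsto_finsetSum _ fun i hi => ?_) _
      exact (hg _).mul (ih i (Finset.mem_range.1 hi))

lemma Rsol_measurable (g : ℝ → ℕ → ℝ) (hg : ∀ m, Measurable (fun x => g x m)) (n : ℕ) :
    Measurable (fun x => Rsol (g x) n) := by
  induction n using Nat.strong_induction_on with
  | _ n ih =>
    cases n with
    | zero => simp only [Rsol_zero]; exact measurable_const
    | succ n =>
      simp only [Rsol_succ]
      refine Measurable.div_const (Finset.measurable_fun_sum _ fun i hi => ?_) _
      exact (hg _).mul (ih i (Finset.mem_range.1 hi))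

open PowerSeries in
lemma Rsol_split (q : ℕ → ℝ) (n : ℕ) :
    Rsol q n = ∑ x ∈ Finset.HasAntidiagonal.antidiagonal n,
      (q 0 ^ x.1 / (x.1.factorial : ℝ)) * Rsol (fun m => if m = 0 then 0 else q m) x.2 := by
  set g : ℕ → ℝ := fun m => if m = 0 then 0 else q m with hgdef
  have key : ∀ (g : ℕ → ℝ) (X : ℕ → ℝ),
      (∀ n : ℕ, ((n : ℝ) + 1) * X (n + 1) = ∑ i ∈ Finset.range (n + 1), g (n - i) * X i) ↔
      d⁄dX ℝ (PowerSeries.mk X) = PowerSeries.mk g * PowerSeries.mk X := by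
    intro g X
    rw [PowerSeries.ext_iff]
    refine forall_congr' fun n => ?_
    rw [coeff_derivative, coeff_mul, coeff_mk, mul_comm]
    rw [Finset.Nat.sum_antidiagonal_eq_sum_range_succ_mk, ← Finset.sum_range_reflect (fun k => coeff ((k, n - k) : ℕ × ℕ).1 (mk g) * coeff ((k, n - k) : ℕ × ℕ).2 (mk X))]
    have : ∑ i ∈ Finset.range (n + 1), g (n - i) * X i =
      ∑ j ∈ Finset.range (n+1), coeff ((n + 1 - 1 - j, n - (n + 1 - 1 - j)) : ℕ × ℕ).1 (mk g) * coeff ((n + 1 - 1 - j, n - (n + 1 - 1 - j)) : ℕ × ℕ).2 (mk X) := by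
      refine Finset.sum_congr rfl fun i hi => ?_
      have := Finset.mem_range.1 hi
      simp only [coeff_mk]
      congr 2 <;> omega
    rw [this]
  have hH : d⁄dX ℝ (PowerSeries.mk (Rsol g)) = PowerSeries.mk g * PowerSeries.mk (Rsol g) := by
    rw [← key]
    intro n
    rw [Rsol_succ]; field_simp
  have hE : d⁄dX ℝ (PowerSeries.mk (fun j => q 0 ^ j / (j.factorial : ℝ))) =
      C (q 0) * PowerSeries.mk (fun j => q 0 ^ j / (j.factorial : ℝ)) := by
    ext n
    rw [coeff_derivative, coeff_C_mul, coeff_mk, coeff_mk, Nat.factorial_succ]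
    push_cast
    field_simp
    ring
  have hq : PowerSeries.mk q = C (q 0) + PowerSeries.mk g := by
    ext n
    rw [map_add, coeff_mk, coeff_mk, coeff_C, hgdef]
    by_cases hn : n = 0 <;> simp [hn]
  symm
  refine Rsol_unique q (fun n => ∑ x ∈ Finset.HasAntidiagonal.antidiagonal n,
      (q 0 ^ x.1 / (x.1.factorial : ℝ)) * Rsol g x.2) (by simp [Rsol_zero]) ?_ n
  refine (key q (fun n => ∑ x ∈ Finset.HasAntidiagonal.antidiagonal n,
      (q 0 ^ x.1 / (x.1.factorial : ℝ)) * Rsol g x.2)).2 ?_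
  have : PowerSeries.mk (fun n => ∑ x ∈ Finset.HasAntidiagonal.antidiagonal n,
      (q 0 ^ x.1 / (x.1.factorial : ℝ)) * Rsol g x.2) =
      PowerSeries.mk (fun j => q 0 ^ j / (j.factorial : ℝ)) * PowerSeries.mk (Rsol g) := by
    ext n; rw [coeff_mk, coeff_mul]; simp only [coeff_mk]
  rw [this, Derivation.leibniz, hH, hE, hq]
  simp only [smul_eq_mul]
  ring

lemma Rsol_summable (g : ℕ → ℝ) (Q : ℝ) (hg : ∀ m, 0 ≤ g m) (hQ : ∀ m, g m ≤ Q * (1/2) ^ m) :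
    Summable (Rsol g) := by
  have hQ0 : 0 ≤ Q := by have := (hg 0).trans (hQ 0); simpa using this
  obtain ⟨N, hN⟩ := exists_nat_gt (4 * Q)
  set A : ℝ := ∑ i ∈ Finset.range (N + 1), Rsol g i / (3/4) ^ i with hA
  have hA0 : 0 ≤ A := Finset.sum_nonneg fun i _ => div_nonneg (Rsol_nonneg g hg i) (by positivity)
  have bound : ∀ n, Rsol g n ≤ A * (3/4) ^ n := by
    intro n
    induction n using Nat.strong_induction_on with
    | _ n ih =>
      by_cases hn : n < N + 1
      · rw [← div_le_iff₀ (by positivity)]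
        exact Finset.single_le_sum (f := fun i => Rsol g i / (3/4 : ℝ) ^ i)
          (fun i _ => div_nonneg (Rsol_nonneg g hg i) (by positivity)) (Finset.mem_range.2 hn)
      · obtain ⟨n, rfl⟩ : ∃ m, n = m + 1 := ⟨n - 1, by omega⟩
        rw [Rsol_succ, div_le_iff₀ (by positivity)]
        have h1 : ∑ i ∈ Finset.range (n + 1), g (n - i) * Rsol g i ≤
            ∑ i ∈ Finset.range (n + 1), (Q * A * (3/4) ^ n) * (2/3) ^ (n - i) := by
          refine Finset.sum_le_sum fun i hi => ?_
          have hi' := Finset.mem_range.1 hi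
          calc g (n - i) * Rsol g i ≤ (Q * (1/2) ^ (n - i)) * (A * (3/4) ^ i) :=
                mul_le_mul (hQ _) (ih i hi') (Rsol_nonneg g hg i) (by positivity)
            _ = _ := by
              have : (3/4 : ℝ) ^ n = (3/4) ^ (n - i) * (3/4) ^ i := by
                rw [← pow_add]; congr 1; omega
              rw [this]
              have h3 : (1/2 : ℝ) ^ (n - i) = (3/4) ^ (n-i) * (2/3) ^ (n - i) := by
                rw [← mul_pow]; norm_num
              rw [h3]; ring
        have h2 : ∑ i ∈ Finset.range (n + 1), (2/3 : ℝ) ^ (n - i) ≤ 3 := by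
          have := Finset.sum_range_reflect (fun i => (2/3 : ℝ) ^ i) (n + 1)
          simp only [Nat.add_sub_cancel] at this
          rw [this, geom_sum_eq (by norm_num)]
          have : (0:ℝ) ≤ (2/3) ^ (n+1) := by positivity
          rw [div_le_iff_of_neg (by norm_num)]
          linarith
        rw [← Finset.mul_sum] at h1
        have h3 : (Q * A * (3/4) ^ n) * ∑ i ∈ Finset.range (n + 1), (2/3 : ℝ) ^ (n - i) ≤ (Q * A * (3/4) ^ n) * 3 :=
          mul_le_mul_of_nonneg_left h2 (by positivity)
        have h4 : (4 * Q) ≤ (n : ℝ) + 1 := by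
          have : (N : ℝ) ≤ n := by exact_mod_cast (by omega : N ≤ n)
          linarith
        calc _ ≤ _ := h1.trans h3
          _ = A * (3/4) ^ (n+1) * (4 * Q) := by ring
          _ ≤ _ := mul_le_mul_of_nonneg_left h4 (by positivity)
  refine Summable.of_nonneg_of_le (Rsol_nonneg g hg) bound ?_
  exact (summable_geometric_of_lt_one (by norm_num) (by norm_num)).mul_left A

/-- ENNReal version -/
noncomputable def aE (s : ℝ) (n : ℕ) : ENNReal := ENNReal.ofReal ((n : ℝ) ^ (-s))

open Classical in
/-- ENNReal version of `Pk` -/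
noncomputable def PE (k : ℕ) (s : ℝ) : ENNReal :=
  ∑' n : ℕ, if n ∈ almostPrimes k then aE s n else 0

lemma aE_mul (s : ℝ) (m n : ℕ) : aE s (m * n) = aE s m * aE s n := by
  unfold aE
  rw [← ENNReal.ofReal_mul (by positivity), Nat.cast_mul, Real.mul_rpow (by positivity) (by positivity)]

lemma aE_pow (s : ℝ) (p m : ℕ) : aE s (p ^ m) = aE (m * s) p := by
  unfold aE
  congr 1
  rw [Nat.cast_pow, ← Real.rpow_natCast, ← Real.rpow_mul (by positivity)]
  congr 1; ring

lemma mem_ap_mul {p m n k : ℕ} (hp : p.Prime) :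
    p ^ m * n ∈ almostPrimes k ↔ m ≤ k ∧ n ∈ almostPrimes (k - m) := by
  simp only [almostPrimes, Set.mem_ofPred_eq, ← ArithmeticFunction.cardFactors_apply]
  rcases Nat.eq_zero_or_pos n with rfl | hn
  · simp
  · rw [ArithmeticFunction.cardFactors_mul (pow_ne_zero _ hp.ne_zero) hn.ne',
      ArithmeticFunction.cardFactors_apply_prime_pow hp]
    have : 0 < p ^ m * n := Nat.mul_pos (pow_pos hp.pos _) hn
    simp only [this, hn, true_and]
    omega

open Classical in
lemma omega_sum (n : ℕ) (hn : 0 < n) :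
    (n.primeFactorsList.length : ENNReal) =
      ∑' p : Nat.Primes, ∑' m : ℕ, if p.1 ^ (m + 1) ∣ n then (1 : ENNReal) else 0 := by
  have h1 : ∀ p : Nat.Primes, (∑' m : ℕ, if p.1 ^ (m + 1) ∣ n then (1 : ENNReal) else 0) =
      (n.factorization p.1 : ENNReal) := by
    intro p
    have : ∀ m : ℕ, p.1 ^ (m+1) ∣ n ↔ m ∈ Finset.range (n.factorization p.1) := by
      intro m
      rw [p.2.pow_dvd_iff_le_factorization hn.ne', Finset.mem_range]
      rfl
    simp only [this]
    rw [tsum_eq_sum (s := Finset.range (n.factorization p.1))]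
    · rw [Finset.sum_congr rfl (g := fun _ => 1) (fun x hx => if_pos hx)]; simp
    · intro b hb; exact if_neg hb
  simp only [h1]
  have h2 : (∑' p : Nat.Primes, (n.factorization p.1 : ENNReal)) =
      ∑' p : ℕ, (n.factorization p : ENNReal) := by
    refine Function.Injective.tsum_eq (g := fun p : Nat.Primes => p.1) (f := fun p : ℕ => (n.factorization p : ENNReal)) Subtype.val_injective ?_
    intro p hp
    have : n.factorization p ≠ 0 := by simpa using hp
    have hpp : p.Prime := by
      by_contra h
      exact this (Nat.factorization_eq_zero_of_not_prime n h)
    exact ⟨⟨p, hpp⟩, rfl⟩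
  rw [h2, tsum_eq_sum (s := n.factorization.support)]
  · rw [← ArithmeticFunction.cardFactors_apply, ArithmeticFunction.cardFactors_eq_sum_factorization, Finsupp.sum]
    push_cast
    rfl
  · intro b hb
    rw [Finsupp.notMem_support_iff] at hb
    rw [hb, Nat.cast_zero]

open Classical in
lemma newtonE (k : ℕ) (s : ℝ) :
    (k : ENNReal) * PE k s = ∑ m ∈ Finset.range k,
      (∑' p : Nat.Primes, aE ((m + 1 : ℕ) * s) p.1) * PE (k - (m + 1)) s := by
  have h1 : (k : ENNReal) * PE k s = ∑' n : ℕ, ∑' p : Nat.Primes, ∑' m : ℕ,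
      (if p.1 ^ (m + 1) ∣ n then (1 : ENNReal) else 0) * (if n ∈ almostPrimes k then aE s n else 0) := by
    rw [PE, ← ENNReal.tsum_mul_left]
    refine tsum_congr fun n => ?_
    simp_rw [ENNReal.tsum_mul_right]
    by_cases hn : n ∈ almostPrimes k
    · rw [← omega_sum n hn.1, hn.2]
    · simp [hn]
  rw [h1, ENNReal.tsum_comm]
  have h2 : ∀ p : Nat.Primes, (∑' n : ℕ, ∑' m : ℕ,
      (if p.1 ^ (m + 1) ∣ n then (1 : ENNReal) else 0) * (if n ∈ almostPrimes k then aE s n else 0)) =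
      ∑' m : ℕ, if m < k then aE ((m + 1 : ℕ) * s) p.1 * PE (k - (m + 1)) s else 0 := by
    intro p
    rw [ENNReal.tsum_comm]
    refine tsum_congr fun m => ?_
    have hinj : Function.Injective (fun n : ℕ => p.1 ^ (m + 1) * n) :=
      fun a b hab => Nat.eq_of_mul_eq_mul_left (pow_pos p.2.pos _) hab
    rw [← hinj.tsum_eq]
    · have : ∀ n : ℕ, ((if p.1 ^ (m + 1) ∣ p.1 ^ (m + 1) * n then (1 : ENNReal) else 0) *
          (if p.1 ^ (m + 1) * n ∈ almostPrimes k then aE s (p.1 ^ (m + 1) * n) else 0)) =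
          (if m < k then aE ((m + 1 : ℕ) * s) p.1 else 0) * (if n ∈ almostPrimes (k - (m + 1)) then aE s n else 0) := by
        intro n
        rw [if_pos (dvd_mul_right _ _), one_mul, mem_ap_mul p.2, aE_mul, aE_pow]
        by_cases hm : m < k
        · have : m + 1 ≤ k := hm
          simp [hm, this]
        · have : ¬ (m + 1 ≤ k) := hm
          simp [hm, this]
      simp only [this]
      rw [ENNReal.tsum_mul_left]
      by_cases hm : m < k
      · simp only [hm, if_true]; rfl
      · simp [hm]
    · intro n hn
      rw [Function.mem_support] at hn
      by_contra hc
      apply hn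
      rw [if_neg, zero_mul]
      rintro ⟨c, hc'⟩
      exact hc ⟨c, hc'.symm⟩
  simp only [h2]
  rw [ENNReal.tsum_comm, tsum_eq_sum (s := Finset.range k)]
  · refine Finset.sum_congr rfl fun m hm => ?_
    simp only [Finset.mem_range.1 hm, if_true]
    rw [ENNReal.tsum_mul_right]
  · intro m hm
    have : ¬ m < k := by simpa using hm
    simp [this]

lemma summable_nat (s : ℝ) (hs : 1 < s) : Summable (fun n : ℕ => (n : ℝ) ^ (-s)) :=
  Real.summable_nat_rpow.2 (by linarith)

lemma summable_primes (s : ℝ) (hs : 1 < s) : Summable (fun p : Nat.Primes => (p.1 : ℝ) ^ (-s)) :=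
  (summable_nat s hs).subtype _

lemma summable_ap (k : ℕ) (s : ℝ) (hs : 1 < s) :
    Summable (fun p : almostPrimes k => (p.1 : ℝ) ^ (-s)) :=
  (summable_nat s hs).subtype _

lemma Pk_nonneg (k : ℕ) (s : ℝ) : 0 ≤ Pk k s := tsum_nonneg fun _ => by positivity

lemma primeZeta_nonneg (s : ℝ) : 0 ≤ primeZeta s := tsum_nonneg fun _ => by positivity

lemma PE_eq' (k : ℕ) (s : ℝ) : PE k s = ∑' n : almostPrimes k, aE s n.1 := by
  rw [PE, tsum_subtype (almostPrimes k) (fun n => aE s n)]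
  refine tsum_congr fun n => ?_
  by_cases hn : n ∈ almostPrimes k <;> simp [hn]

lemma PE_eq (k : ℕ) (s : ℝ) (hs : 1 < s) : PE k s = ENNReal.ofReal (Pk k s) := by
  rw [PE_eq', Pk, ENNReal.ofReal_tsum_of_nonneg (fun _ => by positivity) (summable_ap k s hs)]
  rfl

lemma zE_eq (s : ℝ) (hs : 1 < s) : ∑' p : Nat.Primes, aE s p.1 = ENNReal.ofReal (primeZeta s) := by
  rw [primeZeta, ENNReal.ofReal_tsum_of_nonneg (fun _ => by positivity) (summable_primes s hs)]
  rfl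

lemma newton (k : ℕ) (s : ℝ) (hs : 1 < s) :
    ((k : ℝ) + 1) * Pk (k + 1) s = ∑ i ∈ Finset.range (k + 1),
      primeZeta (((k - i : ℕ) + 1) * s) * Pk i s := by
  have h := newtonE (k + 1) s
  rw [PE_eq _ _ hs, ← ENNReal.ofReal_natCast, ← ENNReal.ofReal_mul (by positivity)] at h
  have h2 : ∀ m ∈ Finset.range (k + 1), (∑' p : Nat.Primes, aE ((m + 1 : ℕ) * s) p.1) * PE (k + 1 - (m + 1)) s
      = ENNReal.ofReal (primeZeta ((m + 1 : ℕ) * s) * Pk (k - m) s) := by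
    intro m _
    rw [zE_eq, PE_eq _ _ hs, ENNReal.ofReal_mul (primeZeta_nonneg _), Nat.add_sub_add_right]
    push_cast
    have : (0:ℝ) ≤ m := by positivity
    nlinarith
  rw [Finset.sum_congr rfl h2, ← ENNReal.ofReal_sum_of_nonneg
    (fun i _ => mul_nonneg (primeZeta_nonneg _) (Pk_nonneg _ _)),
    ENNReal.ofReal_eq_ofReal_iff (mul_nonneg (by positivity) (Pk_nonneg _ _))
    (Finset.sum_nonneg fun i _ => mul_nonneg (primeZeta_nonneg _) (Pk_nonneg _ _))] at h
  push_cast at h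
  rw [h, ← Finset.sum_range_reflect]
  refine Finset.sum_congr rfl fun i hi => ?_
  have := Finset.mem_range.1 hi
  have e1 : k + 1 - 1 - i = k - i := by omega
  have e2 : k - (k - i) = i := by omega
  rw [e1, e2]

lemma ap_zero : almostPrimes 0 = {1} := by
  ext n
  simp only [almostPrimes, Set.mem_ofPred_eq, List.length_eq_zero_iff, Nat.primeFactorsList_eq_nil, Set.mem_singleton_iff]
  omega

lemma Pk_zero (s : ℝ) : Pk 0 s = 1 := by
  rw [Pk, ap_zero]
  simp

lemma Pk_eq_Rsol (k : ℕ) (s : ℝ) (hs : 1 < s) :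
    Pk k s = Rsol (fun m => primeZeta ((m + 1) * s)) k :=
  Rsol_unique _ (fun k => Pk k s) (Pk_zero s) (fun n => newton n s hs) k

lemma tsum_Pk (s : ℝ) (hs : 1 < s) : HasSum (fun k => Pk k s) (∑' n : ℕ, 1 / (n : ℝ) ^ s) := by
  have h0 : ∀ n : ℕ, 1 / (n : ℝ) ^ s = (n : ℝ) ^ (-s) := fun n => by
    rw [Real.rpow_neg (by positivity), one_div]
  simp only [h0]
  have h1 := (summable_nat s hs).hasSum
  have hz : (fun n : ℕ => (n : ℝ) ^ (-s)) 0 = 0 := by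
    simp; rw [Real.zero_rpow]; linarith
  have h3 := (Equiv.sigmaFiberEquiv (fun n : ℕ => n.primeFactorsList.length)).hasSum_iff.2 h1
  refine (h3.sigma (g := fun k => Pk k s) fun k => ?_)
  have hs2 : HasSum (fun n : almostPrimes k => (n.1 : ℝ) ^ (-s)) (Pk k s) := (summable_ap k s hs).hasSum
  let e : almostPrimes k → {n : ℕ // n.primeFactorsList.length = k} := fun n => ⟨n.1, n.2.2⟩
  have he : Function.Injective e := by
    intro a b hab
    have := congrArg Subtype.val hab
    exact Subtype.ext this
  refine (he.hasSum_iff ?_).1 hs2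
  rintro ⟨n, hn⟩ hx
  rcases Nat.eq_zero_or_pos n with rfl | hpos
  · exact hz
  · exact absurd ⟨⟨n, hpos, hn⟩, rfl⟩ hx

open Filter Topology in
lemma W_aux (b d : ℝ) (hb : 0 < b) (hd : 0 < d) (hdb : d ≤ b) (j : ℕ) :
    IntegrableOn (fun t : ℝ => Real.log (b / t) ^ j / (j.factorial : ℝ)) (Set.Ioc 0 d) ∧
    ∫ t in Set.Ioc 0 d, Real.log (b / t) ^ j / (j.factorial : ℝ) =
      d * ∑ i ∈ Finset.range (j + 1), Real.log (b / d) ^ i / (i.factorial : ℝ) := by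
  set G : ℝ → ℝ := fun t => t * ∑ i ∈ Finset.range (j + 1), Real.log (b / t) ^ i / (i.factorial : ℝ) with hG
  have hder : ∀ t : ℝ, 0 < t → HasDerivAt G (Real.log (b / t) ^ j / (j.factorial : ℝ)) t := by
    intro t ht
    have hl : HasDerivAt (fun t : ℝ => Real.log (b / t)) (-(1 / t)) t := by
      have h1 : HasDerivAt (fun t : ℝ => Real.log b - Real.log t) (0 - t⁻¹) t :=
        (hasDerivAt_const t _).sub (Real.hasDerivAt_log ht.ne')
      have h2 : (fun t : ℝ => Real.log (b / t)) =ᶠ[𝓝 t] fun t => Real.log b - Real.log t := by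
        filter_upwards [lt_mem_nhds ht] with x hx
        rw [Real.log_div hb.ne' hx.ne']
      exact (h1.congr_of_eventuallyEq h2).congr_deriv (by rw [zero_sub, one_div])
    have hs : ∀ j : ℕ, HasDerivAt (fun t : ℝ => t * ∑ i ∈ Finset.range (j + 1), Real.log (b / t) ^ i / (i.factorial : ℝ))
        (Real.log (b / t) ^ j / (j.factorial : ℝ)) t := by
      intro j
      induction j with
      | zero => simpa using hasDerivAt_id' t
      | succ j ih =>
        have h3 := ((hl.pow (j + 1)).div_const ((j+1).factorial : ℝ))
        have h4 := ih.add ((hasDerivAt_id t).mul h3)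
        have e : (fun t : ℝ => t * ∑ i ∈ Finset.range (j + 1 + 1), Real.log (b / t) ^ i / (i.factorial : ℝ)) =
          (fun t : ℝ => t * ∑ i ∈ Finset.range (j + 1), Real.log (b / t) ^ i / (i.factorial : ℝ)) + (id * fun t => Real.log (b / t) ^ (j+1) / ((j+1).factorial : ℝ)) := by
          funext x
          rw [Finset.sum_range_succ]; simp [mul_add]
        rw [e]
        refine h4.congr_deriv ?_
        simp only [Nat.factorial_succ]
        push_cast
        simp only [id, Nat.add_sub_cancel, Pi.pow_apply]
        field_simp
        ring
    exact hs j
  have hG0 : Tendsto G (𝓝[>] 0) (𝓝 0) := by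
    have h1 : ∀ i : ℕ, Tendsto (fun t : ℝ => t * (Real.log (b / t) ^ i / (i.factorial : ℝ))) (𝓝[>] 0) (𝓝 0) := by
      intro i
      have h2 : Tendsto (fun t : ℝ => Real.log (b / t)) (𝓝[>] 0) atTop := by
        refine Real.tendsto_log_atTop.comp ?_
        have h9 : Tendsto (fun t : ℝ => b * t⁻¹) (𝓝[>] 0) atTop := Tendsto.const_mul_atTop hb tendsto_inv_nhdsGT_zero
        exact h9.congr fun t => (div_eq_mul_inv b t).symm
      have h3 := ((Real.tendsto_pow_mul_exp_neg_atTop_nhds_zero i).comp h2).mul_const (b / (i.factorial : ℝ))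
      rw [zero_mul] at h3
      refine h3.congr' ?_
      filter_upwards [self_mem_nhdsWithin] with t ht
      have ht : 0 < t := ht
      simp only [Function.comp]
      rw [← Real.log_inv, Real.exp_log (by positivity)]
      field_simp
    have h2 := tendsto_finsetSum (Finset.range (j + 1)) fun i _ => h1 i
    simp only [Finset.sum_const_zero] at h2
    refine h2.congr fun t => ?_
    exact (Finset.mul_sum _ _ _).symm
  have hc : ContinuousOn G (Set.Icc 0 d) := by
    intro t ht
    rcases ht.1.eq_or_lt with h | h
    · subst h
      rw [← Set.Ioc_insert_left hd.le, continuousWithinAt_insert_self]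
      have : G 0 = 0 := by simp [hG]
      rw [ContinuousWithinAt, this]
      exact hG0.mono_left (nhdsWithin_mono _ fun x hx => hx.1)
    · exact (hder t h).continuousAt.continuousWithinAt
  have hint : IntegrableOn (fun t : ℝ => Real.log (b / t) ^ j / (j.factorial : ℝ)) (Set.Ioc 0 d) := by
    refine intervalIntegral.integrableOn_deriv_of_nonneg hc (fun t ht => hder t ht.1) ?_
    intro t ht
    have : 0 ≤ Real.log (b / t) := Real.log_nonneg (by rw [le_div_iff₀ ht.1]; linarith [ht.2])
    positivity
  refine ⟨hint, ?_⟩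
  rw [← intervalIntegral.integral_of_le hd.le, intervalIntegral.integral_eq_sub_of_hasDerivAt_of_le hd.le hc
    (fun t ht => hder t ht.1) ((intervalIntegrable_iff_integrableOn_Ioc_of_le hd.le).2 hint)]
  simp [hG]

open Filter Topology in
lemma exp_partial (x : ℝ) : Tendsto (fun j : ℕ => ∑ i ∈ Finset.range (j + 1), x ^ i / (i.factorial : ℝ)) atTop (𝓝 (Real.exp x)) := by
  have h := (NormedSpace.exp_series_hasSum_exp' (𝕂 := ℝ) x)
  have h2 := h.tendsto_sum_nat
  rw [← Real.exp_eq_exp_ℝ] at h2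
  refine (h2.comp (tendsto_add_atTop_nat 1)).congr fun j => ?_
  simp only [Function.comp]
  refine Finset.sum_congr rfl fun i _ => ?_
  rw [smul_eq_mul]; field_simp

open Filter Topology in
lemma W_tendsto (b d : ℝ) (hb : 0 < b) (hd : 0 < d) (hdb : d ≤ b) :
    Tendsto (fun j : ℕ => ∫ t in Set.Ioc 0 d, Real.log (b / t) ^ j / (j.factorial : ℝ)) atTop (𝓝 b) := by
  have h := (exp_partial (Real.log (b / d))).const_mul d
  rw [Real.exp_log (by positivity), mul_div_cancel₀ _ hd.ne'] at h
  refine h.congr fun j => ((W_aux b d hb hd hdb j).2).symm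

section KL
open Filter Topology
variable {u : ℝ → ℝ} {b C : ℝ}

lemma KL_int (hu : Measurable u) (h0 : ∀ t ∈ Set.Ioc (0:ℝ) 1, 0 ≤ u t) (hb1 : 1 ≤ b)
    (hb : ∀ t ∈ Set.Ioc (0:ℝ) 1, t * Real.exp (u t) ≤ b) (j : ℕ) :
    IntegrableOn (fun t => u t ^ j / (j.factorial : ℝ)) (Set.Ioc 0 1) ∧
    ∫ t in Set.Ioc 0 1, u t ^ j / (j.factorial : ℝ) ≤ b := by
  have hbp : 0 < b := by linarith
  have hle : ∀ t ∈ Set.Ioc (0:ℝ) 1, u t ^ j / (j.factorial : ℝ) ≤ Real.log (b / t) ^ j / (j.factorial : ℝ) := by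
    intro t ht
    have h1 : u t ≤ Real.log (b / t) := by
      rw [Real.le_log_iff_exp_le (div_pos hbp ht.1), le_div_iff₀ ht.1, mul_comm]; exact hb t ht
    have := h0 t ht
    gcongr
  obtain ⟨hW1, hW2⟩ := W_aux b 1 hbp one_pos hb1 j
  have hI : IntegrableOn (fun t => u t ^ j / (j.factorial : ℝ)) (Set.Ioc 0 1) := by
    refine hW1.mono' ((hu.pow_const j).div_const _).aestronglyMeasurable ?_
    refine (ae_restrict_iff' measurableSet_Ioc).2 (ae_of_all _ fun t ht => ?_)
    have := h0 t ht
    rw [Real.norm_of_nonneg (by positivity)]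
    exact hle t ht
  refine ⟨hI, ?_⟩
  refine (setIntegral_mono_on hI hW1 measurableSet_Ioc hle).trans ?_
  rw [hW2, one_mul, div_one]
  refine (Real.sum_le_exp_of_nonneg (Real.log_nonneg hb1) (j+1)).trans ?_
  rw [Real.exp_log hbp]

lemma KL_tail (h0 : ∀ t ∈ Set.Ioc (0:ℝ) 1, 0 ≤ u t) (hb1 : 1 ≤ b)
    (hb : ∀ t ∈ Set.Ioc (0:ℝ) 1, t * Real.exp (u t) ≤ b) (δ : ℝ) (hδ : 0 < δ) (hδ1 : δ ≤ 1) :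
    Tendsto (fun j : ℕ => ∫ t in Set.Ioc δ 1, u t ^ j / (j.factorial : ℝ)) atTop (𝓝 0) := by
  have hbp : 0 < b := by linarith
  refine squeeze_zero (fun j => setIntegral_nonneg measurableSet_Ioc fun t ht => ?_) (fun j => ?_)
    (FloorSemiring.tendsto_pow_div_factorial_atTop (Real.log (b / δ)))
  · have := h0 t ⟨hδ.trans ht.1, ht.2⟩
    positivity
  · have h1 : ‖∫ t in Set.Ioc δ 1, u t ^ j / (j.factorial : ℝ)‖ ≤
        (Real.log (b / δ) ^ j / (j.factorial : ℝ)) * volume.real (Set.Ioc δ 1) := by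
      refine norm_setIntegral_le_of_norm_le_const (by simp) ?_
      intro t ht
      have htp : 0 < t := hδ.trans ht.1
      have h2 := h0 t ⟨htp, ht.2⟩
      rw [Real.norm_of_nonneg (by positivity)]
      have h1 : u t ≤ Real.log (b / δ) := by
        rw [Real.le_log_iff_exp_le (div_pos hbp hδ), le_div_iff₀ hδ, mul_comm]
        refine le_trans ?_ (hb t ⟨htp, ht.2⟩)
        exact mul_le_mul_of_nonneg_right ht.1.le (Real.exp_pos _).le
      gcongr
    have hl : 0 ≤ Real.log (b / δ) := Real.log_nonneg (by rw [le_div_iff₀ hδ]; linarith)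
    refine (le_abs_self _).trans (h1.trans ?_)
    refine mul_le_of_le_one_right (by positivity) ?_
    rw [Real.volume_real_Ioc_of_le hδ1]; linarith

lemma split_int {f : ℝ → ℝ} (hf : IntegrableOn f (Set.Ioc 0 1)) (δ : ℝ) (hδ : 0 < δ) (hδ1 : δ ≤ 1) :
    ∫ t in Set.Ioc 0 1, f t = (∫ t in Set.Ioc 0 δ, f t) + ∫ t in Set.Ioc δ 1, f t := by
  rw [← Set.Ioc_union_Ioc_eq_Ioc hδ.le hδ1]
  refine setIntegral_union (Set.Ioc_disjoint_Ioc_of_le le_rfl) measurableSet_Ioc (hf.mono_set ?_) (hf.mono_set ?_)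
  · exact Set.Ioc_subset_Ioc_right hδ1
  · exact Set.Ioc_subset_Ioc_left hδ.le

lemma KL1 (hu : Measurable u) (h0 : ∀ t ∈ Set.Ioc (0:ℝ) 1, 0 ≤ u t) (hb1 : 1 ≤ b)
    (hb : ∀ t ∈ Set.Ioc (0:ℝ) 1, t * Real.exp (u t) ≤ b) (hC : 0 < C)
    (hlim : Tendsto (fun t => t * Real.exp (u t)) (𝓝[>] 0) (𝓝 C)) :
    Tendsto (fun j : ℕ => ∫ t in Set.Ioc 0 1, u t ^ j / (j.factorial : ℝ)) atTop (𝓝 C) := by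
  have hI := fun j => (KL_int hu h0 hb1 hb j).1
  rw [tendsto_order]
  constructor
  · intro C1 hC1
    obtain ⟨a, ha1, ha2⟩ := exists_between (max_lt hC1 hC)
    have hap : 0 < a := (le_max_right _ _).trans_lt ha1
    have hC1a : C1 < a := (le_max_left _ _).trans_lt ha1
    obtain ⟨δ0, hδ0, hδ0'⟩ := (mem_nhdsGT_iff_exists_Ioc_subset).1 (hlim.eventually (lt_mem_nhds ha2))
    have hδ0 : 0 < δ0 := hδ0
    obtain ⟨δ, hδ⟩ : ∃ δ, δ = min δ0 (min a 1) := ⟨_, rfl⟩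
    have hδp : 0 < δ := by rw [hδ]; positivity
    have hδ1 : δ ≤ 1 := by rw [hδ]; exact (min_le_right _ _).trans (min_le_right _ _)
    have hδa : δ ≤ a := by rw [hδ]; exact (min_le_right _ _).trans (min_le_left _ _)
    have hδδ : δ ≤ δ0 := by rw [hδ]; exact (min_le_left _ _)
    filter_upwards [(W_tendsto a δ hap hδp hδa).eventually (lt_mem_nhds hC1a)] with j hj
    refine hj.trans_le ?_
    rw [split_int (hI j) δ hδp hδ1]
    have h1 : 0 ≤ ∫ t in Set.Ioc δ 1, u t ^ j / (j.factorial : ℝ) :=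
      setIntegral_nonneg measurableSet_Ioc fun t ht => by
        have := h0 t ⟨hδp.trans ht.1, ht.2⟩
        positivity
    have h2 : ∫ t in Set.Ioc 0 δ, Real.log (a / t) ^ j / (j.factorial : ℝ) ≤ ∫ t in Set.Ioc 0 δ, u t ^ j / (j.factorial : ℝ) := by
      refine setIntegral_mono_on (W_aux a δ hap hδp hδa j).1 ((hI j).mono_set (Set.Ioc_subset_Ioc_right hδ1)) measurableSet_Ioc ?_
      intro t ht
      have h3 : a < t * Real.exp (u t) := hδ0' ⟨ht.1, ht.2.trans hδδ⟩
      have h4 : 0 ≤ Real.log (a / t) := Real.log_nonneg (by rw [le_div_iff₀ ht.1]; linarith [ht.2])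
      have h5 : Real.log (a / t) ≤ u t := by
        rw [Real.log_le_iff_le_exp (div_pos hap ht.1), div_le_iff₀ ht.1, mul_comm]; exact h3.le
      gcongr
    linarith
  · intro C2 hC2
    obtain ⟨a, ha1, ha2⟩ := exists_between hC2
    have hap : 0 < a := hC.trans ha1
    obtain ⟨δ0, hδ0, hδ0'⟩ := (mem_nhdsGT_iff_exists_Ioc_subset).1 (hlim.eventually (gt_mem_nhds ha1))
    have hδ0 : 0 < δ0 := hδ0
    obtain ⟨δ, hδ⟩ : ∃ δ, δ = min δ0 (min a 1) := ⟨_, rfl⟩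
    have hδp : 0 < δ := by rw [hδ]; positivity
    have hδ1 : δ ≤ 1 := by rw [hδ]; exact (min_le_right _ _).trans (min_le_right _ _)
    have hδa : δ ≤ a := by rw [hδ]; exact (min_le_right _ _).trans (min_le_left _ _)
    have hδδ : δ ≤ δ0 := by rw [hδ]; exact (min_le_left _ _)
    have hT := (W_tendsto a δ hap hδp hδa).add (KL_tail h0 hb1 hb δ hδp hδ1)
    rw [add_zero] at hT
    filter_upwards [hT.eventually (gt_mem_nhds ha2)] with j hj
    refine lt_of_le_of_lt ?_ hj
    rw [split_int (hI j) δ hδp hδ1]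
    refine add_le_add ?_ le_rfl
    refine setIntegral_mono_on ((hI j).mono_set (Set.Ioc_subset_Ioc_right hδ1)) (W_aux a δ hap hδp hδa j).1 measurableSet_Ioc ?_
    intro t ht
    have h3 : t * Real.exp (u t) < a := hδ0' ⟨ht.1, ht.2.trans hδδ⟩
    have h5 : u t ≤ Real.log (a / t) := by
      rw [Real.le_log_iff_exp_le (div_pos hap ht.1), le_div_iff₀ ht.1, mul_comm]; exact h3.le
    have := h0 t ⟨ht.1, ht.2.trans hδ1⟩
    gcongr

lemma KL_phi_int (hu : Measurable u) (h0 : ∀ t ∈ Set.Ioc (0:ℝ) 1, 0 ≤ u t) (hb1 : 1 ≤ b)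
    (hb : ∀ t ∈ Set.Ioc (0:ℝ) 1, t * Real.exp (u t) ≤ b)
    {φ : ℝ → ℝ} (hφ : Measurable φ) {M : ℝ} (hM : ∀ t ∈ Set.Ioc (0:ℝ) 1, |φ t| ≤ M) (j : ℕ) :
    IntegrableOn (fun t => φ t * (u t ^ j / (j.factorial : ℝ))) (Set.Ioc 0 1) := by
  refine (KL_int hu h0 hb1 hb j).1.bdd_mul (c := M) hφ.aestronglyMeasurable ?_
  exact (ae_restrict_iff' measurableSet_Ioc).2 (ae_of_all _ fun t ht => hM t ht)

lemma KL2 (hu : Measurable u) (h0 : ∀ t ∈ Set.Ioc (0:ℝ) 1, 0 ≤ u t) (hb1 : 1 ≤ b)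
    (hb : ∀ t ∈ Set.Ioc (0:ℝ) 1, t * Real.exp (u t) ≤ b) (hC : 0 < C)
    (hlim : Tendsto (fun t => t * Real.exp (u t)) (𝓝[>] 0) (𝓝 C))
    {φ : ℝ → ℝ} (hφ : Measurable φ) {M : ℝ} (hM : ∀ t ∈ Set.Ioc (0:ℝ) 1, |φ t| ≤ M) {φ0 : ℝ}
    (hφ0 : Tendsto φ (𝓝[>] 0) (𝓝 φ0)) :
    Tendsto (fun j : ℕ => ∫ t in Set.Ioc 0 1, φ t * (u t ^ j / (j.factorial : ℝ))) atTop (𝓝 (φ0 * C)) := by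
  have hI := fun j => (KL_int hu h0 hb1 hb j).1
  have hIφ := fun j => KL_phi_int hu h0 hb1 hb hφ hM j
  have h1 := (KL1 hu h0 hb1 hb hC hlim).const_mul φ0
  set M' := M + |φ0| with hM'
  have hM0 : 0 ≤ M' := by
    have := (abs_nonneg _).trans (hM 1 (by simp))
    positivity
  suffices hs : Tendsto (fun j : ℕ => (∫ t in Set.Ioc 0 1, φ t * (u t ^ j / (j.factorial : ℝ))) -
      φ0 * ∫ t in Set.Ioc 0 1, u t ^ j / (j.factorial : ℝ)) atTop (𝓝 0) by
    have := hs.add h1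
    simpa using this
  have hmeas : ∀ t ∈ Set.Ioc (0:ℝ) 1, |φ t - φ0| ≤ M' := fun t ht =>
    (abs_sub _ _).trans (add_le_add (hM t ht) le_rfl)
  have hIψ := fun j => KL_phi_int (φ := fun t => |φ t - φ0|) (M := M') hu h0 hb1 hb (by fun_prop)
    (fun t ht => by rw [abs_abs]; exact hmeas t ht) j
  rw [Metric.tendsto_atTop']
  intro ε hε
  have hε' : 0 < ε / (2 * b) := by positivity
  obtain ⟨δ0, hδ0, hδ0'⟩ := (mem_nhdsGT_iff_exists_Ioc_subset).1 (hφ0.eventually (Metric.ball_mem_nhds _ hε'))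
  have hδ0 : 0 < δ0 := hδ0
  obtain ⟨δ, hδ⟩ : ∃ δ, δ = min δ0 1 := ⟨_, rfl⟩
  have hδp : 0 < δ := by rw [hδ]; positivity
  have hδ1 : δ ≤ 1 := by rw [hδ]; exact (min_le_right _ _)
  have hδδ : δ ≤ δ0 := by rw [hδ]; exact (min_le_left _ _)
  have hT := (KL_tail h0 hb1 hb δ hδp hδ1).const_mul M'
  rw [mul_zero] at hT
  obtain ⟨N, hN⟩ := eventually_atTop.1 (hT.eventually (gt_mem_nhds (half_pos hε)))
  refine ⟨N, fun j hj => ?_⟩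
  have hj' := hN j hj.le
  rw [dist_zero_right, ← integral_const_mul, ← integral_sub (hIφ j) ((hI j).const_mul φ0)]
  refine (norm_integral_le_integral_norm _).trans_lt ?_
  have e : ∫ t in Set.Ioc 0 1, ‖φ t * (u t ^ j / (j.factorial : ℝ)) - φ0 * (u t ^ j / (j.factorial : ℝ))‖ =
      ∫ t in Set.Ioc 0 1, |φ t - φ0| * (u t ^ j / (j.factorial : ℝ)) := by
    refine setIntegral_congr_fun measurableSet_Ioc fun t ht => ?_
    have := h0 t ht
    rw [← sub_mul, norm_mul, Real.norm_eq_abs, Real.norm_of_nonneg (by positivity)]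
  rw [e, split_int (hIψ j) δ hδp hδ1]
  have hA : ∫ t in Set.Ioc 0 δ, |φ t - φ0| * (u t ^ j / (j.factorial : ℝ)) ≤ ε / 2 := by
    have h3 : ∫ t in Set.Ioc 0 δ, |φ t - φ0| * (u t ^ j / (j.factorial : ℝ)) ≤
        ∫ t in Set.Ioc 0 δ, (ε / (2 * b)) * (u t ^ j / (j.factorial : ℝ)) := by
      refine setIntegral_mono_on ((hIψ j).mono_set (Set.Ioc_subset_Ioc_right hδ1))
        (((hI j).mono_set (Set.Ioc_subset_Ioc_right hδ1)).const_mul _) measurableSet_Ioc ?_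
      intro t ht
      have h4 : φ t ∈ Metric.ball φ0 (ε / (2 * b)) := hδ0' ⟨ht.1, ht.2.trans hδδ⟩
      rw [Metric.mem_ball, Real.dist_eq] at h4
      have := h0 t ⟨ht.1, ht.2.trans hδ1⟩
      gcongr
    have h5 : ∫ t in Set.Ioc 0 δ, (u t ^ j / (j.factorial : ℝ)) ≤ b := by
      refine le_trans ?_ (KL_int hu h0 hb1 hb j).2
      refine setIntegral_mono_set (hI j) ?_ (Set.Ioc_subset_Ioc_right hδ1).eventuallyLE
      refine (ae_restrict_iff' measurableSet_Ioc).2 (ae_of_all _ fun t ht => ?_)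
      have := h0 t ht
      simp only [Pi.zero_apply]
      positivity
    rw [integral_const_mul] at h3
    refine h3.trans ((mul_le_mul_of_nonneg_left h5 hε'.le).trans (le_of_eq ?_))
    field_simp
  have hB : ∫ t in Set.Ioc δ 1, |φ t - φ0| * (u t ^ j / (j.factorial : ℝ)) ≤
      M' * ∫ t in Set.Ioc δ 1, (u t ^ j / (j.factorial : ℝ)) := by
    rw [← integral_const_mul]
    refine setIntegral_mono_on ((hIψ j).mono_set (Set.Ioc_subset_Ioc_left hδp.le))
        (((hI j).mono_set (Set.Ioc_subset_Ioc_left hδp.le)).const_mul _) measurableSet_Ioc ?_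
    intro t ht
    have h6 : t ∈ Set.Ioc (0:ℝ) 1 := ⟨hδp.trans ht.1, ht.2⟩
    have := h0 t h6
    have := hmeas t h6
    gcongr
  linarith

end KL

section Main
open Filter Topology

lemma primeZeta_measurable : Measurable primeZeta := by
  have : primeZeta = fun s => (∑' p : Nat.Primes, aE s p.1).toReal := by
    funext s
    rw [ENNReal.tsum_toReal_eq (fun p => by simp [aE])]
    refine tsum_congr fun p => ?_
    rw [aE, ENNReal.toReal_ofReal (by positivity)]
  rw [this]
  refine Measurable.ennreal_toReal (Measurable.ennreal_tsum fun p => ?_)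
  unfold aE
  refine Measurable.ennreal_ofReal ?_
  exact measurable_const.pow measurable_neg

lemma primeZeta_anti {s s' : ℝ} (hs : 1 < s) (h : s ≤ s') : primeZeta s' ≤ primeZeta s := by
  refine Summable.tsum_le_tsum (fun p => ?_) (summable_primes s' (by linarith)) (summable_primes s hs)
  refine Real.rpow_le_rpow_of_exponent_le ?_ (by linarith)
  exact_mod_cast p.2.one_lt.le

/-- the coefficients without the first one -/
noncomputable def gg (t : ℝ) (m : ℕ) : ℝ := if m = 0 then 0 else primeZeta ((m + 1) * (1 + t))

lemma gg_nonneg (t : ℝ) (m : ℕ) : 0 ≤ gg t m := by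
  unfold gg; split_ifs
  · exact le_rfl
  · exact primeZeta_nonneg _

lemma gg_one {m : ℕ} (hm : m ≠ 0) : (2:ℝ) ≤ m + 1 := by
  have : (1:ℝ) ≤ m := by exact_mod_cast Nat.one_le_iff_ne_zero.2 hm
  linarith

lemma gg_le (t : ℝ) (ht : 0 ≤ t) (m : ℕ) : gg t m ≤ gg 0 m := by
  unfold gg; split_ifs with hm
  · exact le_rfl
  · have := gg_one hm
    exact primeZeta_anti (by linarith) (by nlinarith)

lemma gg_bound (m : ℕ) : gg 0 m ≤ (2 * primeZeta 2) * (1/2) ^ m := by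
  unfold gg; split_ifs with hm
  · have := primeZeta_nonneg 2
    positivity
  · have h2 := gg_one hm
    rw [add_zero, mul_one, primeZeta, primeZeta, mul_assoc, mul_comm, mul_assoc, ← tsum_mul_right]
    refine Summable.tsum_le_tsum (fun p => ?_) (summable_primes _ (by linarith)) ((summable_primes 2 (by norm_num)).mul_right _)
    have hp : (2:ℝ) ≤ p.1 := by exact_mod_cast p.2.two_le
    have hp0 : (0:ℝ) < p.1 := by linarith
    have e : -((m:ℝ) + 1) = -2 + (-((m:ℝ) - 1)) := by ring
    rw [e, Real.rpow_add hp0]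
    refine mul_le_mul_of_nonneg_left ?_ (by positivity)
    have h3 : (p.1:ℝ) ^ (-((m:ℝ) - 1)) ≤ (2:ℝ) ^ (-((m:ℝ) - 1)) :=
      Real.rpow_le_rpow_of_nonpos (by norm_num) hp (by linarith)
    refine h3.trans (le_of_eq ?_)
    rw [show -((m:ℝ) - 1) = 1 + -(m:ℝ) by ring, Real.rpow_add (by norm_num), Real.rpow_one,
      Real.rpow_neg (by norm_num), Real.rpow_natCast, one_div, inv_pow, mul_comm]

lemma gg_meas (m : ℕ) : Measurable (fun t => gg t m) := by
  unfold gg; split_ifs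
  · exact measurable_const
  · exact primeZeta_measurable.comp (by fun_prop)

lemma gg_tendsto (m : ℕ) : Tendsto (fun t => gg t m) (𝓝[>] 0) (𝓝 (gg 0 m)) := by
  unfold gg; split_ifs with hm
  · exact tendsto_const_nhds
  · have h2 := gg_one hm
    unfold primeZeta
    refine tendsto_tsum_of_dominated_convergence (bound := fun p : Nat.Primes => (p.1:ℝ) ^ (-((m:ℝ)+1)))
      (summable_primes _ (by linarith)) (fun p => ?_) ?_
    · have hp0 : (0:ℝ) < p.1 := by exact_mod_cast p.2.pos
      have : Continuous (fun t : ℝ => (p.1:ℝ) ^ (-(((m:ℝ)+1) * (1 + t)))) :=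
        Continuous.rpow continuous_const (by fun_prop) (fun _ => Or.inl hp0.ne')
      exact (this.tendsto 0).mono_left nhdsWithin_le_nhds
    · filter_upwards [self_mem_nhdsWithin] with t ht p
      have ht : 0 < t := ht
      rw [Real.norm_of_nonneg (by positivity)]
      refine Real.rpow_le_rpow_of_exponent_le ?_ (by nlinarith)
      exact_mod_cast p.2.one_lt.le

/-- the coefficients of the correction factor -/
noncomputable def HH (i : ℕ) (t : ℝ) : ℝ := Rsol (gg t) i

lemma HH_nonneg (i : ℕ) (t : ℝ) : 0 ≤ HH i t := Rsol_nonneg _ (gg_nonneg t) i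

lemma HH_le (i : ℕ) (t : ℝ) (ht : 0 ≤ t) : HH i t ≤ HH i 0 :=
  Rsol_mono _ _ (gg_nonneg t) (gg_le t ht) i

lemma HH_summable0 : Summable (fun i => HH i 0) := Rsol_summable _ _ (gg_nonneg 0) gg_bound

lemma HH_summable (t : ℝ) (ht : 0 ≤ t) : Summable (fun i => HH i t) :=
  Summable.of_nonneg_of_le (fun i => HH_nonneg i t) (fun i => HH_le i t ht) HH_summable0

lemma HH_tendsto (i : ℕ) : Tendsto (HH i) (𝓝[>] 0) (𝓝 (HH i 0)) :=
  Rsol_tendsto gg (gg 0) gg_tendsto i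

lemma HH_meas (i : ℕ) : Measurable (HH i) := Rsol_measurable gg gg_meas i

lemma SS_tendsto : Tendsto (fun t => ∑' i, HH i t) (𝓝[>] 0) (𝓝 (∑' i, HH i 0)) := by
  refine tendsto_tsum_of_dominated_convergence HH_summable0 HH_tendsto ?_
  filter_upwards [self_mem_nhdsWithin] with t ht i
  rw [Real.norm_of_nonneg (HH_nonneg i t)]
  exact HH_le i t (le_of_lt ht)

lemma SS_ge (t : ℝ) (ht : 0 ≤ t) : 1 ≤ ∑' i, HH i t := by
  have h := (HH_summable t ht).le_tsum 0 (fun i _ => HH_nonneg i t)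
  have : HH 0 t = 1 := Rsol_zero _
  rwa [this] at h

lemma Pk_split (k : ℕ) (t : ℝ) (ht : 0 < t) :
    Pk k (1 + t) = ∑ x ∈ Finset.HasAntidiagonal.antidiagonal k,
      (primeZeta (1 + t) ^ x.1 / (x.1.factorial : ℝ)) * HH x.2 t := by
  rw [Pk_eq_Rsol k _ (by linarith), Rsol_split]
  refine Finset.sum_congr rfl fun x _ => ?_
  congr 1
  simp

lemma exp_mul_SS (t : ℝ) (ht : 0 < t) :
    Real.exp (primeZeta (1 + t)) * ∑' i, HH i t = ∑' n : ℕ, 1 / (n : ℝ) ^ (1 + t) := by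
  rw [← (tsum_Pk (1 + t) (by linarith)).tsum_eq]
  simp only [Pk_split _ t ht]
  have hE : Summable (fun j : ℕ => primeZeta (1 + t) ^ j / (j.factorial : ℝ)) :=
    Real.summable_pow_div_factorial _
  have hEv : ∑' j : ℕ, primeZeta (1 + t) ^ j / (j.factorial : ℝ) = Real.exp (primeZeta (1 + t)) := by
    have h1 := hE.hasSum.tendsto_sum_nat
    exact tendsto_nhds_unique (h1.comp (tendsto_add_atTop_nat 1)) (exp_partial _)
  rw [← hEv]
  have h0 := primeZeta_nonneg (1 + t)
  exact tsum_mul_tsum_eq_tsum_sum_antidiagonal_of_summable_norm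
    (f := fun j : ℕ => primeZeta (1 + t) ^ j / (j.factorial : ℝ)) (g := fun i => HH i t)
    hE.norm (HH_summable t ht.le).norm

lemma u_tendsto : Tendsto (fun t => t * Real.exp (primeZeta (1 + t))) (𝓝[>] 0) (𝓝 (∑' i, HH i 0)⁻¹) := by
  have h1 : Tendsto (fun t : ℝ => 1 + t) (𝓝[>] 0) (𝓝[>] 1) := by
    refine tendsto_nhdsWithin_iff.2 ⟨?_, ?_⟩
    · have : Continuous (fun t : ℝ => 1 + t) := by fun_prop
      have h := this.tendsto 0
      rw [add_zero] at h
      exact h.mono_left nhdsWithin_le_nhds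
    · filter_upwards [self_mem_nhdsWithin] with t ht
      have ht : 0 < t := ht
      simpa using ht
  have h2 := tendsto_sub_mul_tsum_nat_rpow.comp h1
  have h3 := h2.div SS_tendsto (by linarith [SS_ge 0 le_rfl])
  rw [one_div] at h3
  refine h3.congr' ?_
  filter_upwards [self_mem_nhdsWithin] with t ht
  have ht : 0 < t := ht
  have h4 := SS_ge t ht.le
  simp only [Function.comp_apply, Pi.div_apply]
  rw [← exp_mul_SS t ht]
  field_simp
  ring

lemma u_bound : ∃ b : ℝ, 1 ≤ b ∧ ∀ t ∈ Set.Ioc (0:ℝ) 1, t * Real.exp (primeZeta (1 + t)) ≤ b := by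
  set C := (∑' i, HH i 0)⁻¹ with hC
  obtain ⟨δ, hδ, hδ'⟩ := (mem_nhdsGT_iff_exists_Ioc_subset).1
    (u_tendsto.eventually (gt_mem_nhds (lt_add_one C)))
  have hδ : 0 < δ := hδ
  refine ⟨max 1 (max (C + 1) (Real.exp (primeZeta (1 + δ)))), le_max_left _ _, fun t ht => ?_⟩
  rcases le_total t δ with h | h
  · have : t * Real.exp (primeZeta (1 + t)) < C + 1 := hδ' ⟨ht.1, h⟩
    exact this.le.trans ((le_max_left _ _).trans (le_max_right _ _))
  · have h1 : primeZeta (1 + t) ≤ primeZeta (1 + δ) := primeZeta_anti (by linarith) (by linarith)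
    have h2 : t * Real.exp (primeZeta (1 + t)) ≤ 1 * Real.exp (primeZeta (1 + δ)) :=
      mul_le_mul ht.2 (Real.exp_le_exp.2 h1) (Real.exp_pos _).le zero_le_one
    rw [one_mul] at h2
    exact h2.trans ((le_max_right _ _).trans (le_max_right _ _))

lemma I_main (h : ℝ) (hh : 0 ≤ h) :
    (∀ k, IntegrableOn (fun t => Real.exp (-h * t) * Pk k (1 + t)) (Set.Ioc 0 1)) ∧
    Tendsto (fun k : ℕ => ∫ t in Set.Ioc 0 1, Real.exp (-h * t) * Pk k (1 + t)) atTop (𝓝 1) := by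
  obtain ⟨b, hb1, hb⟩ := u_bound
  have hu : Measurable (fun t : ℝ => primeZeta (1 + t)) := primeZeta_measurable.comp (by fun_prop)
  have h0 : ∀ t ∈ Set.Ioc (0:ℝ) 1, 0 ≤ primeZeta (1 + t) := fun t _ => primeZeta_nonneg _
  have hS := SS_ge 0 le_rfl
  have hC : 0 < (∑' i, HH i 0)⁻¹ := by positivity
  have hφ : ∀ i, Measurable (fun t => Real.exp (-h * t) * HH i t) := fun i =>
    Measurable.mul (by fun_prop) (HH_meas i)
  have hφ0 : ∀ i t, 0 ≤ Real.exp (-h * t) * HH i t := fun i t => mul_nonneg (Real.exp_pos _).le (HH_nonneg i t)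
  have hM : ∀ i, ∀ t ∈ Set.Ioc (0:ℝ) 1, |Real.exp (-h * t) * HH i t| ≤ HH i 0 := by
    intro i t ht
    rw [abs_of_nonneg (hφ0 i t)]
    have : Real.exp (-h * t) ≤ 1 := Real.exp_le_one_iff.2 (by nlinarith [ht.1])
    calc _ ≤ 1 * HH i 0 := mul_le_mul this (HH_le i t ht.1.le) (HH_nonneg i t) zero_le_one
      _ = _ := one_mul _
  have hlim : ∀ i, Tendsto (fun t => Real.exp (-h * t) * HH i t) (𝓝[>] 0) (𝓝 (HH i 0)) := by
    intro i
    have : Continuous (fun t : ℝ => Real.exp (-h * t)) := by fun_prop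
    have h1 := ((this.tendsto 0).mono_left (nhdsWithin_le_nhds (s := Set.Ioi 0))).mul (HH_tendsto i)
    simpa using h1
  set J : ℕ → ℕ → ℝ := fun i j => ∫ t in Set.Ioc 0 1, (Real.exp (-h * t) * HH i t) *
    (primeZeta (1 + t) ^ j / (j.factorial : ℝ)) with hJ
  have hJint := fun i j => KL_phi_int hu h0 hb1 hb (hφ i) (hM i) j
  have hJlim : ∀ i, Tendsto (J i) atTop (𝓝 (HH i 0 * (∑' i, HH i 0)⁻¹)) := fun i =>
    KL2 hu h0 hb1 hb hC u_tendsto (hφ i) (hM i) (hlim i)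
  have hJ0 : ∀ i j, 0 ≤ J i j := fun i j => setIntegral_nonneg measurableSet_Ioc fun t ht => by
    have := h0 t ht
    have := hφ0 i t
    positivity
  have hJb : ∀ i j, J i j ≤ HH i 0 * b := by
    intro i j
    have h1 : J i j ≤ ∫ t in Set.Ioc 0 1, HH i 0 * (primeZeta (1 + t) ^ j / (j.factorial : ℝ)) := by
      refine setIntegral_mono_on (hJint i j) ((KL_int hu h0 hb1 hb j).1.const_mul _) measurableSet_Ioc ?_
      intro t ht
      have := h0 t ht
      exact mul_le_mul_of_nonneg_right ((le_abs_self _).trans (hM i t ht)) (by positivity)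
    rw [integral_const_mul] at h1
    exact h1.trans (mul_le_mul_of_nonneg_left (KL_int hu h0 hb1 hb j).2 (HH_nonneg i 0))
  have hcongr : ∀ k, Set.EqOn (fun t => Real.exp (-h * t) * Pk k (1 + t)) (fun t => ∑ x ∈ Finset.HasAntidiagonal.antidiagonal k,
      (Real.exp (-h * t) * HH x.2 t) * (primeZeta (1 + t) ^ x.1 / (x.1.factorial : ℝ))) (Set.Ioc 0 1) := by
    intro k t ht
    simp only
    rw [Pk_split k t ht.1, Finset.mul_sum]
    refine Finset.sum_congr rfl fun x _ => by ring
  refine ⟨fun k => ?_, ?_⟩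
  · rw [integrableOn_congr_fun (hcongr k) measurableSet_Ioc]
    exact integrable_finsetSum _ fun x _ => hJint x.2 x.1
  · have e : ∀ k : ℕ, ∫ t in Set.Ioc 0 1, Real.exp (-h * t) * Pk k (1 + t) =
        ∑' i : ℕ, if i ≤ k then J i (k - i) else 0 := by
      intro k
      rw [setIntegral_congr_fun measurableSet_Ioc (hcongr k), integral_finsetSum _ (fun (x : ℕ × ℕ) _ => hJint x.2 x.1)]
      rw [tsum_eq_sum (s := Finset.range (k + 1))]
      · rw [← Finset.Nat.sum_antidiagonal_swap (n := k) (f := fun x => ∫ t in Set.Ioc 0 1, (Real.exp (-h * t) * HH x.2 t) * (primeZeta (1 + t) ^ x.1 / (x.1.factorial : ℝ))), Finset.Nat.sum_antidiagonal_eq_sum_range_succ_mk]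
        refine Finset.sum_congr rfl fun i hi => ?_
        rw [if_pos (Nat.lt_succ_iff.1 (Finset.mem_range.1 hi))]
        rfl
      · intro i hi
        exact if_neg fun hc => hi (Finset.mem_range.2 (Nat.lt_succ_of_le hc))
    simp only [e]
    have hone : (1:ℝ) = ∑' i, HH i 0 * (∑' i, HH i 0)⁻¹ := by
      rw [tsum_mul_right, mul_inv_cancel₀ (by linarith)]
    rw [hone]
    refine tendsto_tsum_of_dominated_convergence (bound := fun i => HH i 0 * b) (HH_summable0.mul_right b) (fun i => ?_) ?_
    · refine ((hJlim i).comp (tendsto_sub_atTop_nat i)).congr' ?_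
      filter_upwards [eventually_ge_atTop i] with k hk
      simp [hk]
    · refine Eventually.of_forall fun k i => ?_
      split_ifs
      · rw [Real.norm_of_nonneg (hJ0 _ _)]; exact hJb _ _
      · rw [norm_zero]; exact mul_nonneg (HH_nonneg _ _) (by linarith)

lemma term_eq (h : ℝ) (hh : 0 ≤ h) (n : ℕ) (hn : 2 ≤ n) :
    1 / ((n : ℝ) * (Real.log n + h)) = (∫ t in Set.Ioc (0:ℝ) 1, Real.exp (-h * t) * (n : ℝ) ^ (-(1 + t))) +
      Real.exp (-h) * ((n : ℝ) ^ (-2 : ℝ) / (Real.log n + h)) := by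
  have hn2 : (2:ℝ) ≤ n := by exact_mod_cast hn
  have hn0 : (0:ℝ) < n := by linarith
  have hl : 0 < Real.log n := Real.log_pos (by linarith)
  set c := Real.log n + h with hc
  have hcp : 0 < c := by positivity
  have e1 : ∀ t : ℝ, Real.exp (-h * t) * (n : ℝ) ^ (-(1 + t)) = (n:ℝ)⁻¹ * Real.exp (-c * t) := by
    intro t
    rw [Real.rpow_def_of_pos hn0, ← Real.exp_add]
    rw [show (n:ℝ)⁻¹ = Real.exp (- Real.log n) by rw [Real.exp_neg, Real.exp_log hn0], ← Real.exp_add, hc]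
    congr 1; ring
  have e2 : Real.exp (-h) * ((n : ℝ) ^ (-2 : ℝ) / c) = (n:ℝ)⁻¹ * (Real.exp (-c) / c) := by
    have := e1 1
    rw [mul_one, mul_one, show (-(1 + 1) : ℝ) = -2 by norm_num] at this
    rw [← mul_div_assoc, this, mul_div_assoc]
  simp only [e1]
  rw [e2, integral_const_mul, ← intervalIntegral.integral_of_le zero_le_one]
  have e3 : ∫ t in (0:ℝ)..1, Real.exp (-c * t) = (1 - Real.exp (-c)) / c := by
    rw [intervalIntegral.integral_comp_mul_left (fun x => Real.exp x) (neg_ne_zero.2 hcp.ne')]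
    rw [integral_exp]
    simp
    field_simp
    ring
  rw [e3]
  field_simp
  ring

lemma ap_two {k : ℕ} (hk : 1 ≤ k) {n : ℕ} (hn : n ∈ almostPrimes k) : 2 ≤ n := by
  obtain ⟨h1, h2⟩ := hn
  by_contra hc
  have : n = 1 := by omega
  subst this
  simp at h2
  omega

lemma transSum_eq (h : ℝ) (hh : 0 ≤ h) (k : ℕ) (hk : 1 ≤ k) :
    ∃ T : ℝ, 0 ≤ T ∧ T ≤ Pk k 2 * (Real.log 2)⁻¹ ∧
    transSum (almostPrimes k) h = (∫ t in Set.Ioc 0 1, Real.exp (-h * t) * Pk k (1 + t)) + T := by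
  have hl2 : 0 < Real.log 2 := Real.log_pos (by norm_num)
  have hle : ∀ n : almostPrimes k, Real.exp (-h) * ((n.1 : ℝ) ^ (-2 : ℝ) / (Real.log n.1 + h)) ≤ (n.1 : ℝ) ^ (-2 : ℝ) * (Real.log 2)⁻¹ := by
    intro n
    have hn2 : (2:ℝ) ≤ n.1 := by exact_mod_cast ap_two hk n.2
    have h1 : Real.log 2 ≤ Real.log n.1 + h := by
      have := Real.log_le_log (by norm_num) hn2
      linarith
    have h2 : Real.exp (-h) ≤ 1 := Real.exp_le_one_iff.2 (by linarith)
    have h3 : (n.1 : ℝ) ^ (-2 : ℝ) / (Real.log n.1 + h) ≤ (n.1 : ℝ) ^ (-2 : ℝ) * (Real.log 2)⁻¹ := by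
      rw [div_eq_mul_inv]
      gcongr
    refine le_trans (mul_le_of_le_one_left ?_ h2) h3
    have : 0 < Real.log n.1 + h := by linarith
    positivity
  have hnn : ∀ n : almostPrimes k, 0 ≤ Real.exp (-h) * ((n.1 : ℝ) ^ (-2 : ℝ) / (Real.log n.1 + h)) := by
    intro n
    have hn2 : (2:ℝ) ≤ n.1 := by exact_mod_cast ap_two hk n.2
    have := Real.log_nonneg (by linarith : (1:ℝ) ≤ n.1)
    positivity
  have hs2 : Summable (fun n : almostPrimes k => (n.1 : ℝ) ^ (-2 : ℝ) * (Real.log 2)⁻¹) :=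
    (summable_ap k 2 (by norm_num)).mul_right _
  have hsT := Summable.of_nonneg_of_le hnn hle hs2
  refine ⟨∑' n : almostPrimes k, Real.exp (-h) * ((n.1 : ℝ) ^ (-2 : ℝ) / (Real.log n.1 + h)), tsum_nonneg hnn, ?_, ?_⟩
  · rw [Pk, ← tsum_mul_right]
    exact Summable.tsum_le_tsum hle hsT hs2
  · have hae : ∀ {p : ℝ → Prop}, (∀ t ∈ Set.Ioc (0:ℝ) 1, p t) → ∀ᵐ t ∂(volume.restrict (Set.Ioc (0:ℝ) 1)), p t :=
      fun hp => (ae_restrict_iff' measurableSet_Ioc).2 (ae_of_all _ hp)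
    have hI : HasSum (fun n : almostPrimes k => ∫ t in Set.Ioc (0:ℝ) 1, Real.exp (-h * t) * (n.1 : ℝ) ^ (-(1 + t)))
        (∫ t in Set.Ioc 0 1, Real.exp (-h * t) * Pk k (1 + t)) := by
      refine hasSum_integral_of_dominated_convergence (fun (n : almostPrimes k) t => Real.exp (-h * t) * (n.1 : ℝ) ^ (-(1 + t)))
        (fun n => ?_) (fun n => ?_) ?_ ?_ ?_
      · refine Measurable.aestronglyMeasurable ?_
        exact Measurable.mul (by fun_prop) (measurable_const.pow (by fun_prop))
      · refine hae fun t ht => ?_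
        rw [Real.norm_of_nonneg (by positivity)]
      · exact hae fun t ht => (summable_ap k (1 + t) (by linarith [ht.1])).mul_left _
      · simp only [tsum_mul_left]
        exact (I_main h hh).1 k
      · exact hae fun t ht => (summable_ap k (1 + t) (by linarith [ht.1])).hasSum.mul_left _
    have := hI.add hsT.hasSum
    rw [transSum, ← this.tsum_eq]
    exact tsum_congr fun n => term_eq h hh n.1 (ap_two hk n.2)

end Main

/-- For every fixed real `h ≥ 0`, `f(N_k,h) → 1` as `k → ∞`. -/
theorem stmt_15 (h : ℝ) (hh : 0 ≤ h) :
    Filter.Tendsto (fun k : ℕ => transSum (almostPrimes k) h) Filter.atTop (nhds 1) := by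
  have h1 := (I_main h hh).2
  have h2 : Filter.Tendsto (fun k => Pk k 2 * (Real.log 2)⁻¹) Filter.atTop (nhds 0) := by
    have := (tsum_Pk 2 (by norm_num)).summable.tendsto_atTop_zero.mul_const ((Real.log 2)⁻¹)
    simpa using this
  have h3 := h1.add h2
  rw [add_zero] at h3
  refine tendsto_of_tendsto_of_tendsto_of_le_of_le' h1 h3 ?_ ?_
  · filter_upwards [Filter.eventually_ge_atTop 1] with k hk
    obtain ⟨T, hT0, hT1, hT2⟩ := transSum_eq h hh k hk
    rw [hT2]; linarith
  · filter_upwards [Filter.eventually_ge_atTop 1] with k hk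
    obtain ⟨T, hT0, hT1, hT2⟩ := transSum_eq h hh k hk
    rw [hT2]; linarith
end

section
/- Let α = exp(−∑_{m≥2} P(m)/m). Then for every real s with 1 < s ≤ 2, one has 0 < P(s) − log(α/(s−1)) < 1.4(s−1). -/
open MeasureTheory Real

noncomputable def fP (n : ℕ) : ℝ := Real.log n / ((n : ℝ) * ((n : ℝ) - 1))

lemma fP_nonneg {n : ℕ} (hn : 2 ≤ n) : 0 ≤ fP n := by
  have h : (2 : ℝ) ≤ n := by exact_mod_cast hn
  unfold fP
  exact div_nonneg (Real.log_nonneg (by linarith)) (mul_nonneg (by linarith) (by linarith))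

lemma fP_step {x : ℝ} (hx : 3 ≤ x) :
    Real.log x / (x * (x - 1)) + (Real.log (x + 2) + 1) / (2 * x)
      ≤ (Real.log x + 1) / (2 * (x - 2)) := by
  have h1 : Real.log (x + 2) ≤ Real.log x + 2 / x := by
    have : Real.log ((x + 2) / x) ≤ (x + 2) / x - 1 := Real.log_le_sub_one_of_pos (by positivity)
    rw [Real.log_div (by positivity) (by positivity)] at this
    have e : (x + 2) / x - 1 = 2 / x := by field_simp; ring
    linarith
  have hl : 0 ≤ Real.log x := Real.log_nonneg (by linarith)
  have h2 : Real.log x / (x * (x - 1)) ≤ Real.log x / (x * (x - 2)) := by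
    apply div_le_div_of_nonneg_left hl
    · apply mul_pos <;> linarith
    · nlinarith
  have h3 : (Real.log (x + 2) + 1) / (2 * x) ≤ (Real.log x + 2 / x + 1) / (2 * x) := by
    gcongr
  have h4 : (Real.log x + 1) / (2 * (x - 2)) =
      Real.log x / (x * (x - 2)) + (Real.log x + 1) / (2 * x) + 1 / (x * (x - 2)) := by
    have : x - 2 ≠ 0 := by linarith
    field_simp
    ring
  have h5 : (Real.log x + 2 / x + 1) / (2 * x) = (Real.log x + 1) / (2 * x) + 1 / (x * x) := by
    field_simp
    ring
  have h6 : 1 / (x * x) ≤ 1 / (x * (x - 2)) := by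
    apply one_div_le_one_div_of_le
    · apply mul_pos <;> linarith
    · nlinarith
  linarith

lemma logle {a b : ℝ} (ha : 0 < a) (h : a ≤ b) : Real.log a ≤ Real.log b :=
  Real.log_le_log ha h

lemma log235 (a b c : ℕ) : Real.log (2 ^ a * 3 ^ b * 5 ^ c) =
    a * Real.log 2 + b * Real.log 3 + c * Real.log 5 := by
  rw [Real.log_mul (by positivity) (by positivity), Real.log_mul (by positivity) (by positivity),
    Real.log_pow, Real.log_pow, Real.log_pow]

lemma logub {x : ℝ} (hx : 0 < x) (k a b c : ℕ) (h : x ^ k ≤ 2 ^ a * 3 ^ b * 5 ^ c) :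
    k * Real.log x ≤ a * 0.693147181 + b * 1.098612289 + c * 1.609437913 := by
  have h1 := logle (by positivity) h
  rw [log235, Real.log_pow] at h1
  have h2 := Real.log_two_lt_d9.le
  have h3 := Real.log_three_lt_d9.le
  have h5 := Real.log_five_lt_d9.le
  have i2 : (a : ℝ) * Real.log 2 ≤ a * 0.693147181 := by gcongr; linarith
  have i3 : (b : ℝ) * Real.log 3 ≤ b * 1.098612289 := by gcongr; linarith
  have i5 : (c : ℝ) * Real.log 5 ≤ c * 1.609437913 := by gcongr; linarith
  linarith

lemma base_num : ∑ n ∈ (Finset.range 48).filter Nat.Prime, fP n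
    ≤ 0.8 - (Real.log 49 + 1) / (2 * 47) := by
  have e : (Finset.range 48).filter Nat.Prime =
      {2, 3, 5, 7, 11, 13, 17, 19, 23, 29, 31, 37, 41, 43, 47} := by decide
  rw [e]
  have l2 := logub (x := 2) (by norm_num) 1 1 0 0 (by norm_num)
  have l3 := logub (x := 3) (by norm_num) 1 0 1 0 (by norm_num)
  have l5 := logub (x := 5) (by norm_num) 1 0 0 1 (by norm_num)
  have l7 := logub (x := 7) (by norm_num) 2 1 0 2 (by norm_num)
  have l11 := logub (x := 11) (by norm_num) 2 0 0 3 (by norm_num)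
  have l13 := logub (x := 13) (by norm_num) 2 2 2 1 (by norm_num)
  have l17 := logub (x := 17) (by norm_num) 1 1 2 0 (by norm_num)
  have l19 := logub (x := 19) (by norm_num) 1 2 0 1 (by norm_num)
  have l23 := logub (x := 23) (by norm_num) 1 3 1 0 (by norm_num)
  have l29 := logub (x := 29) (by norm_num) 1 1 1 1 (by norm_num)
  have l31 := logub (x := 31) (by norm_num) 1 5 0 0 (by norm_num)
  have l37 := logub (x := 37) (by norm_num) 1 3 0 1 (by norm_num)
  have l41 := logub (x := 41) (by norm_num) 1 0 2 1 (by norm_num)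
  have l43 := logub (x := 43) (by norm_num) 1 0 2 1 (by norm_num)
  have l47 := logub (x := 47) (by norm_num) 1 4 1 0 (by norm_num)
  have l49 := logub (x := 49) (by norm_num) 1 1 0 2 (by norm_num)
  simp only [Nat.cast_ofNat, Nat.cast_one, Nat.cast_zero] at l2 l3 l5 l7 l11 l13 l17 l19 l23 l29 l31 l37 l41 l43 l47 l49
  rw [Finset.sum_insert (by decide), Finset.sum_insert (by decide), Finset.sum_insert (by decide),
    Finset.sum_insert (by decide), Finset.sum_insert (by decide), Finset.sum_insert (by decide),
    Finset.sum_insert (by decide), Finset.sum_insert (by decide), Finset.sum_insert (by decide),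
    Finset.sum_insert (by decide), Finset.sum_insert (by decide), Finset.sum_insert (by decide),
    Finset.sum_insert (by decide), Finset.sum_insert (by decide), Finset.sum_singleton]
  simp only [fP, Nat.cast_ofNat]
  norm_num only
  linarith

lemma partial_bound (j : ℕ) :
    ∑ n ∈ (Finset.range (2 * (j + 24))).filter Nat.Prime, fP n
      ≤ 0.8 - (Real.log (2 * j + 49 : ℝ) + 1) / (2 * (2 * j + 47)) := by
  induction j with
  | zero => simpa using base_num
  | succ j ih =>
    have e : 2 * (j + 1 + 24) = 2 * (j + 24) + 1 + 1 := by ring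
    rw [e, Finset.sum_filter, Finset.sum_range_succ, Finset.sum_range_succ, ← Finset.sum_filter]
    have np : ¬ Nat.Prime (2 * (j + 24)) := Nat.not_prime_mul (by norm_num) (by omega)
    rw [if_neg np]
    have hs := fP_step (x := 2 * j + 49) (by have : (0 : ℝ) ≤ j := by positivity
                                             linarith)
    have h1 : (if Nat.Prime (2 * (j + 24) + 1) then fP (2 * (j + 24) + 1) else 0)
        ≤ Real.log (2 * j + 49 : ℝ) / ((2 * j + 49) * (2 * j + 49 - 1)) := by
      have : fP (2 * (j + 24) + 1)
          = Real.log (2 * j + 49 : ℝ) / ((2 * j + 49) * (2 * j + 49 - 1)) := by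
        unfold fP; push_cast
        have : (2 * ((j : ℝ) + 24) + 1) = 2 * j + 49 := by ring
        rw [this]
      split_ifs
      · exact this.le
      · rw [← this]; exact fP_nonneg (by omega)
    push_cast
    have e1 : (2 * ((j : ℝ) + 1) + 49) = 2 * j + 49 + 2 := by ring
    have e2 : (2 * ((j : ℝ) + 1) + 47) = 2 * j + 49 := by ring
    have e3 : (2 * (j : ℝ) + 49 - 2) = 2 * j + 47 := by ring
    rw [e1, e2]
    rw [e3] at hs
    linarith

lemma finset_bound (u : Finset Nat.Primes) : ∑ p ∈ u, fP p.1 ≤ 0.8 := by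
  classical
  set v : Finset ℕ := u.image (fun p : Nat.Primes => (p.1 : ℕ)) with hv
  have h0 : ∑ p ∈ u, fP p.1 = ∑ n ∈ v, fP n := by
    rw [hv]
    exact (Finset.sum_image (f := fP) (fun a _ b _ h => Subtype.ext h)).symm
  obtain ⟨N, hN⟩ := v.exists_nat_subset_range
  rw [h0]
  have hp : ∀ n ∈ v, Nat.Prime n := by
    intro n hn
    obtain ⟨p, _, h⟩ := Finset.mem_image.1 hn
    rw [← h]
    exact p.2
  have h1 : ∑ n ∈ v, fP n ≤ ∑ n ∈ (Finset.range (2 * (N + 24))).filter Nat.Prime, fP n := by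
    apply Finset.sum_le_sum_of_subset_of_nonneg
    · intro n hn
      have := Finset.mem_range.1 (hN hn)
      simp only [Finset.mem_filter, Finset.mem_range]
      exact ⟨by omega, hp n hn⟩
    · intro n hn _
      exact fP_nonneg (Finset.mem_filter.1 hn).2.two_le
  have h2 := partial_bound N
  have h3 : 0 ≤ (Real.log (2 * N + 49 : ℝ) + 1) / (2 * (2 * N + 47)) := by
    have : 0 ≤ Real.log (2 * N + 49 : ℝ) := Real.log_nonneg (by
      have : (0 : ℝ) ≤ N := by positivity
      linarith)
    positivity
  linarith

lemma fP_summable : Summable (fun p : Nat.Primes => fP p.1) :=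
  summable_of_sum_le (fun p => fP_nonneg p.2.two_le) finset_bound

lemma fP_tsum : ∑' p : Nat.Primes, fP p.1 ≤ 0.8 :=
  fP_summable.tsum_le_of_sum_le finset_bound

/-! zeta part -/

noncomputable def Z (s : ℝ) : ℝ := ∑' n : ℕ, ((n : ℝ) + 1) ^ (-s)

lemma Z_summable {s : ℝ} (hs : 1 < s) : Summable (fun n : ℕ => ((n : ℝ) + 1) ^ (-s)) := by
  have := (summable_nat_add_iff 1).2 (Real.summable_nat_rpow.2 (show -s < -1 by linarith))
  simpa using this

lemma tele_tendsto {e : ℝ} (he : 0 < e) (a : ℝ) :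
    Filter.Tendsto (fun N : ℕ => ((N : ℝ) + a) ^ (-e)) Filter.atTop (nhds 0) :=
  (tendsto_rpow_neg_atTop he).comp
    (Filter.tendsto_atTop_add_const_right _ _ tendsto_natCast_atTop_atTop)

lemma low_term {e x : ℝ} (he : 0 < e) (hx : 0 < x) :
    x ^ (-e) - (x + 1) ^ (-e) ≤ e * x ^ (-(1 + e)) := by
  have h1 : Real.log (x + 1) ≤ Real.log x + 1 / x := by
    have : Real.log ((x + 1) / x) ≤ (x + 1) / x - 1 := Real.log_le_sub_one_of_pos (by positivity)
    rw [Real.log_div (by positivity) (by positivity)] at this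
    have e : (x + 1) / x - 1 = 1 / x := by field_simp; ring
    linarith
  have h2 : x ^ (-(1 + e)) = x ^ (-e) / x := by
    rw [show -(1 + e) = -e - 1 by ring, Real.rpow_sub_one hx.ne']
  have h3 : x ^ (-e) * (1 - e / x) ≤ (x + 1) ^ (-e) := by
    rw [Real.rpow_def_of_pos hx, Real.rpow_def_of_pos (by linarith : 0 < x + 1)]
    have a1 : 1 - e / x ≤ Real.exp (-(e / x)) := by
      have := Real.add_one_le_exp (-(e / x)); linarith
    calc _ ≤ Real.exp (Real.log x * -e) * Real.exp (-(e / x)) := by gcongr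
      _ = Real.exp (Real.log x * -e + -(e / x)) := by rw [Real.exp_add]
      _ ≤ _ := by
        apply Real.exp_le_exp.2
        have : e * Real.log (x + 1) ≤ e * (Real.log x + 1 / x) := by gcongr
        have q : e * (1 / x) = e / x := by ring
        nlinarith
  rw [h2]
  have : x ^ (-e) * (1 - e / x) = x ^ (-e) - e * (x ^ (-e) / x) := by ring
  linarith

lemma Z_low {e : ℝ} (he : 0 < e) : 1 ≤ e * Z (1 + e) := by
  have hs := (Z_summable (s := 1 + e) (by linarith)).hasSum.mul_left e
  have ht := hs.tendsto_sum_nat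
  have h1 : Filter.Tendsto (fun N : ℕ => 1 - ((N : ℝ) + 1) ^ (-e)) Filter.atTop (nhds (1 - 0)) :=
    (tele_tendsto he 1).const_sub 1
  rw [sub_zero] at h1
  refine le_of_tendsto_of_tendsto' h1 ht ?_
  intro N
  induction N with
  | zero => simp
  | succ N ih =>
    rw [Finset.sum_range_succ]
    have := low_term (x := N + 1) he (by positivity)
    push_cast
    linarith

lemma mid_term {e x : ℝ} (he : 0 < e) (hx : 1 ≤ x) :
    e * x ^ (-(1 + e)) ≤ (x - 1 / 2) ^ (-e) - (x + 1 / 2) ^ (-e) := by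
  have hx0 : 0 < x := by linarith
  have hA : 0 < x - 1 / 2 := by linarith
  have hB : 0 < x + 1 / 2 := by linarith
  have h2 : x ^ (-(1 + e)) = x ^ (-e) / x := by
    rw [show -(1 + e) = -e - 1 by ring, Real.rpow_sub_one hx0.ne']
  rw [h2, Real.rpow_def_of_pos hA, Real.rpow_def_of_pos hB, Real.rpow_def_of_pos hx0]
  set a := Real.log (x - 1 / 2)
  set b := Real.log (x + 1 / 2)
  have hd : 1 / x ≤ b - a := by
    have := Real.le_log_one_add_of_nonneg (x := 1 / (x - 1 / 2)) (by positivity)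
    have e1 : 1 + 1 / (x - 1 / 2) = (x + 1 / 2) / (x - 1 / 2) := by
      rw [eq_div_iff hA.ne', add_mul, one_div_mul_cancel hA.ne']; ring
    have e2 : 2 * (1 / (x - 1 / 2)) / (1 / (x - 1 / 2) + 2) = 1 / x := by
      have : x - 1 / 2 ≠ 0 := hA.ne'
      have h5 : 1 / (x - 1 / 2) + 2 = 2 * x / (x - 1 / 2) := by
        rw [eq_div_iff hA.ne', add_mul, one_div_mul_cancel hA.ne']; ring
      rw [h5, div_div_eq_mul_div, mul_assoc, one_div_mul_cancel hA.ne']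
      field_simp
    rw [e1, e2, Real.log_div hB.ne' hA.ne'] at this
    exact this
  have hm : (a + b) / 2 ≤ Real.log x := by
    have : a + b ≤ Real.log (x * x) := by
      rw [← Real.log_mul hA.ne' hB.ne']
      apply logle (by positivity); nlinarith
    rw [Real.log_mul hx0.ne' hx0.ne'] at this
    linarith
  set m := (a + b) / 2 with hmd
  set d := e * (b - a) / 2 with hdd
  have ea : Real.exp (a * -e) = Real.exp (-e * m) * Real.exp d := by
    rw [← Real.exp_add]; congr 1; rw [hmd, hdd]; ring
  have eb : Real.exp (b * -e) = Real.exp (-e * m) * Real.exp (-d) := by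
    rw [← Real.exp_add]; congr 1; rw [hmd, hdd]; ring
  have d0 : 0 ≤ d := by
    have : 0 ≤ 1 / x := by positivity
    have : 0 ≤ b - a := by linarith
    positivity
  have hsinh : 2 * d ≤ Real.exp d - Real.exp (-d) := by
    have := Real.self_le_sinh_iff.2 d0
    rw [Real.sinh_eq] at this; linarith
  have hmm : Real.exp (Real.log x * -e) ≤ Real.exp (-e * m) := by
    apply Real.exp_le_exp.2; nlinarith
  have h2d : e * (1 / x) ≤ 2 * d := by
    have : e * (1 / x) ≤ e * (b - a) := by gcongr
    rw [hdd]; linarith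
  rw [ea, eb, ← mul_sub]
  calc e * (Real.exp (Real.log x * -e) / x) = Real.exp (Real.log x * -e) * (e * (1 / x)) := by ring
    _ ≤ Real.exp (-e * m) * (Real.exp d - Real.exp (-d)) := by
      gcongr; linarith

lemma Z_up {e : ℝ} (he : 0 < e) : e * Z (1 + e) ≤ e + (3 / 2) ^ (-e) := by
  have hs := (Z_summable (s := 1 + e) (by linarith)).hasSum.mul_left e
  have ht := hs.tendsto_sum_nat.comp (Filter.tendsto_add_atTop_nat 1)
  refine le_of_tendsto' ht ?_
  intro N
  have key : ∑ i ∈ Finset.range (N + 1), e * ((i : ℝ) + 1) ^ (-(1 + e))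
      ≤ e + (3 / 2) ^ (-e) - ((N : ℝ) + 3 / 2) ^ (-e) := by
    induction N with
    | zero => simp
    | succ N ih =>
      rw [Finset.sum_range_succ]
      have := mid_term (x := N + 2) he (by have : (0 : ℝ) ≤ N := by positivity
                                           linarith)
      push_cast
      have e1 : (N : ℝ) + 1 + 1 = N + 2 := by ring
      have e2 : (N : ℝ) + 2 - 1 / 2 = N + 3 / 2 := by ring
      have e3 : (N : ℝ) + 1 + 3 / 2 = N + 2 + 1 / 2 := by ring
      rw [e1, e3]; rw [e2] at this
      linarith
  have : 0 ≤ ((N : ℝ) + 3 / 2) ^ (-e) := by positivity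
  simp only [Function.comp]
  linarith

lemma Z_log_up {e : ℝ} (he : 0 < e) (he1 : e ≤ 1) : Real.log (e * Z (1 + e)) < 0.6 * e := by
  have hpos : 0 < e * Z (1 + e) := lt_of_lt_of_le one_pos (Z_low he)
  rw [Real.log_lt_iff_lt_exp hpos]
  refine (Z_up he).trans_lt ?_
  have hL : (0.405 : ℝ) ≤ Real.log (3 / 2) := by
    rw [Real.log_div (by norm_num) (by norm_num)]
    have := Real.log_two_lt_d9
    have := Real.log_three_gt_d9
    norm_num at *
    linarith
  have h1 : ((3 : ℝ) / 2) ^ (-e) ≤ Real.exp (-(0.405 * e)) := by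
    rw [Real.rpow_def_of_pos (by norm_num)]
    apply Real.exp_le_exp.2; nlinarith
  have h2 : Real.exp (-(0.405 * e)) ≤ 1 - 0.405 * e + (0.405 * e) ^ 2 / 2 := by
    have h := Real.quadratic_le_exp_of_nonneg (show 0 ≤ 0.405 * e by positivity)
    rw [Real.exp_neg, inv_le_comm₀ (Real.exp_pos _) (by nlinarith)]
    refine le_trans ?_ h
    rw [inv_le_iff_one_le_mul₀ (by nlinarith)]
    nlinarith [sq_nonneg ((0.405 * e) ^ 2)]
  have h3 := Real.quadratic_le_exp_of_nonneg (show 0 ≤ 0.6 * e by positivity)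
  norm_num at *
  nlinarith [mul_pos he he]

/-! prime part -/

noncomputable def hf (x : ℝ) : ℝ := -Real.log (1 - x) - x

lemma hf_low {x y : ℝ} (hy : 0 < y) (hxy : y < x) (hx : x < 1) : 0 < hf x - hf y := by
  unfold hf
  have h1 : Real.log ((1 - x) / (1 - y)) ≤ (1 - x) / (1 - y) - 1 :=
    Real.log_le_sub_one_of_pos (div_pos (by linarith) (by linarith))
  rw [Real.log_div (by linarith) (by linarith)] at h1
  have h2 : (1 - x) / (1 - y) - 1 = -(x - y) - (x - y) * y / (1 - y) := by
    have : 1 - y ≠ 0 := by linarith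
    field_simp; ring
  have h3 : 0 < (x - y) * y / (1 - y) :=
    div_pos (mul_pos (by linarith) hy) (by linarith)
  linarith

lemma hf_up {x y : ℝ} (hxy : y < x) (hx : x < 1) :
    hf x - hf y ≤ (x - y) * (x / (1 - x)) := by
  unfold hf
  have h1 : Real.log ((1 - y) / (1 - x)) ≤ (1 - y) / (1 - x) - 1 :=
    Real.log_le_sub_one_of_pos (div_pos (by linarith) (by linarith))
  rw [Real.log_div (by linarith) (by linarith)] at h1
  have h2 : (1 - y) / (1 - x) - 1 = (x - y) + (x - y) * (x / (1 - x)) := by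
    have : 1 - x ≠ 0 := by linarith
    field_simp; ring
  linarith

lemma prime_bds (p : Nat.Primes) {e : ℝ} (he : 0 < e) :
    0 < hf ((p.1 : ℝ)⁻¹) - hf ((p.1 : ℝ) ^ (-(1 + e))) ∧
    hf ((p.1 : ℝ)⁻¹) - hf ((p.1 : ℝ) ^ (-(1 + e))) ≤ e * fP p.1 := by
  have hp : (2 : ℝ) ≤ p.1 := by exact_mod_cast p.2.two_le
  set q : ℝ := (p.1 : ℝ) with hq
  have q0 : 0 < q := by linarith
  have hy : 0 < q ^ (-(1 + e)) := by positivity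
  have hx1 : q⁻¹ < 1 := inv_lt_one_of_one_lt₀ (by linarith)
  have h2 : q ^ (-(1 + e)) = q⁻¹ * q ^ (-e) := by
    rw [show -(1 + e) = -e - 1 by ring, Real.rpow_sub_one q0.ne']; ring
  have hxy : q ^ (-(1 + e)) < q⁻¹ := by
    rw [h2]
    have : q ^ (-e) < 1 := Real.rpow_lt_one_of_one_lt_of_neg (by linarith) (by linarith)
    have h3 : 0 < q⁻¹ := by positivity
    nlinarith
  refine ⟨hf_low hy hxy hx1, (hf_up hxy hx1).trans ?_⟩
  have h4 : q⁻¹ / (1 - q⁻¹) = 1 / (q - 1) := by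
    have : q - 1 ≠ 0 := by linarith
    field_simp
  have h5 : q⁻¹ - q ^ (-(1 + e)) ≤ q⁻¹ * (e * Real.log q) := by
    rw [h2]
    have : 1 - e * Real.log q ≤ q ^ (-e) := by
      rw [Real.rpow_def_of_pos q0]
      have := Real.add_one_le_exp (Real.log q * -e); linarith
    have h3 : 0 < q⁻¹ := by positivity
    nlinarith
  rw [h4]
  have h6 : 0 < 1 / (q - 1) := by apply one_div_pos.2; linarith
  calc _ ≤ q⁻¹ * (e * Real.log q) * (1 / (q - 1)) := by gcongr
    _ = e * fP p.1 := by
      unfold fP; rw [← hq]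
      have : q - 1 ≠ 0 := by linarith
      field_simp

lemma hf_hasSum {x : ℝ} (h0 : 0 ≤ x) (h1 : x < 1) :
    HasSum (fun n : ℕ => x ^ (n + 2) / ((n : ℝ) + 2)) (hf x) := by
  have := Real.hasSum_pow_div_log_of_abs_lt_one (x := x) (by rwa [abs_of_nonneg h0])
  have h := (hasSum_nat_add_iff' 1).2 this
  simp only [Finset.sum_range_one] at h
  have e1 : (fun n : ℕ => x ^ (n + 2) / ((n : ℝ) + 2))
      = (fun n : ℕ => x ^ (n + 1 + 1) / (((n + 1 : ℕ) : ℝ) + 1)) := by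
    funext n; push_cast; ring_nf
  have e2 : hf x = -Real.log (1 - x) - x ^ (0 + 1) / (((0 : ℕ) : ℝ) + 1) := by
    unfold hf; simp
  rw [e1, e2]
  exact h

lemma hf_nonneg {x : ℝ} (h0 : 0 ≤ x) (h1 : x < 1) : 0 ≤ hf x :=
  (hf_hasSum h0 h1).nonneg (fun n => by positivity)

lemma hf_le {x : ℝ} (h1 : x ≤ 1 / 2) : hf x ≤ 2 * x ^ 2 := by
  unfold hf
  have h := Real.one_sub_inv_le_log_of_pos (show 0 < 1 - x by linarith)
  have e : 1 - (1 - x)⁻¹ = - x - x ^ 2 / (1 - x) := by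
    have : 1 - x ≠ 0 := by linarith
    field_simp; ring
  have : x ^ 2 / (1 - x) ≤ 2 * x ^ 2 := by
    rw [div_le_iff₀ (by linarith)]; nlinarith [sq_nonneg x]
  linarith

lemma pinv (p : Nat.Primes) : 0 ≤ (p.1 : ℝ)⁻¹ ∧ (p.1 : ℝ)⁻¹ ≤ 1 / 2 := by
  have hp : (2 : ℝ) ≤ p.1 := by exact_mod_cast p.2.two_le
  refine ⟨by positivity, ?_⟩
  rw [one_div]; gcongr

lemma hf_inv_summable : Summable (fun p : Nat.Primes => hf ((p.1 : ℝ)⁻¹)) := by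
  have h2 : Summable (fun p : Nat.Primes => 2 * ((p.1 : ℝ)⁻¹) ^ 2) := by
    have := (Nat.Primes.summable_rpow (r := -2)).2 (by norm_num)
    refine (this.mul_left 2).congr ?_
    intro p
    rw [Real.rpow_neg (by positivity)]; simp
  exact h2.of_nonneg_of_le (fun p => hf_nonneg (pinv p).1 (by linarith [(pinv p).2]))
    (fun p => hf_le (pinv p).2)

lemma A_eq : (∑' m : {m : ℕ // 2 ≤ m}, primeZeta (m.1 : ℝ) / (m.1 : ℝ))
    = ∑' p : Nat.Primes, hf ((p.1 : ℝ)⁻¹) := by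
  let eqv : ℕ ≃ {m : ℕ // 2 ≤ m} :=
    { toFun := fun n => ⟨n + 2, by omega⟩
      invFun := fun m => m.1 - 2
      left_inv := fun n => by simp
      right_inv := fun m => by
        apply Subtype.ext
        have := m.2
        simp only
        omega }
  rw [← eqv.tsum_eq]
  have h1 : ∀ n : ℕ, primeZeta ((eqv n).1 : ℝ) / ((eqv n).1 : ℝ)
      = ∑' p : Nat.Primes, ((p.1 : ℝ)⁻¹) ^ (n + 2) / ((n : ℝ) + 2) := by
    intro n
    have : (eqv n).1 = n + 2 := rfl
    rw [this, primeZeta, tsum_div_const]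
    push_cast
    congr 1
    apply tsum_congr
    intro p
    rw [Real.rpow_neg (by positivity), inv_pow]
    congr 1
    exact_mod_cast Real.rpow_natCast (p.1 : ℝ) (n + 2)
  simp_rw [h1]
  have hs : Summable (Function.uncurry (fun (p : Nat.Primes) (n : ℕ) =>
      ((p.1 : ℝ)⁻¹) ^ (n + 2) / ((n : ℝ) + 2))) := by
    refine (summable_prod_of_nonneg ?_).2 ⟨?_, ?_⟩
    · intro q; simp only [Function.uncurry, Pi.zero_apply]; positivity
    · intro p
      exact (hf_hasSum (pinv p).1 (by linarith [(pinv p).2])).summable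
    · refine hf_inv_summable.congr ?_
      intro p
      exact (hf_hasSum (pinv p).1 (by linarith [(pinv p).2])).tsum_eq.symm
  rw [hs.tsum_comm]
  apply tsum_congr
  intro p
  exact (hf_hasSum (pinv p).1 (by linarith [(pinv p).2])).tsum_eq

lemma log_Z {s : ℝ} (hs : 1 < s) :
    Real.log (Z s) = ∑' p : Nat.Primes, -Real.log (1 - (p.1 : ℝ) ^ (-s)) := by
  have h1 : riemannZeta (s : ℂ) = ((Z s : ℝ) : ℂ) := by
    rw [zeta_eq_tsum_one_div_nat_add_one_cpow (by simpa using hs), Z, Complex.ofReal_tsum]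
    apply tsum_congr
    intro n
    rw [Real.rpow_neg (by positivity), Complex.ofReal_inv, Complex.ofReal_cpow (by positivity)]
    push_cast
    rw [one_div]
  have h2 := riemannZeta_eulerProduct_exp_log (s := (s : ℂ)) (by simpa using hs)
  have h3 : (∑' p : Nat.Primes, -Complex.log (1 - (p : ℂ) ^ (-(s : ℂ))))
      = ((∑' p : Nat.Primes, -Real.log (1 - (p.1 : ℝ) ^ (-s)) : ℝ) : ℂ) := by
    rw [Complex.ofReal_tsum]
    apply tsum_congr
    intro p
    have hp : (1 : ℝ) < p.1 := by exact_mod_cast p.2.one_lt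
    have : (p.1 : ℝ) ^ (-s) < 1 := Real.rpow_lt_one_of_one_lt_of_neg hp (by linarith)
    rw [Complex.ofReal_neg, Complex.ofReal_log (by linarith), Complex.ofReal_sub,
      Complex.ofReal_cpow (by positivity)]
    push_cast
    rfl
  rw [h3, h1, ← Complex.ofReal_exp] at h2
  have h4 := Complex.ofReal_injective h2
  rw [← h4, Real.log_exp]

theorem stmt_17 (α : ℝ)
    (hα : α = Real.exp (-(∑' m : {m : ℕ // 2 ≤ m}, primeZeta (m.1 : ℝ) / (m.1 : ℝ)))) :
    ∀ s : ℝ, 1 < s → s ≤ 2 →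
      0 < primeZeta s - Real.log (α / (s - 1)) ∧
      primeZeta s - Real.log (α / (s - 1)) < 1.4 * (s - 1) := by
  intro s hs1 hs2
  obtain ⟨e, rfl⟩ : ∃ e, s = 1 + e := ⟨s - 1, by ring⟩
  have he : 0 < e := by linarith
  have he1 : e ≤ 1 := by linarith
  have es : 1 + e - 1 = e := by ring
  rw [es, hα, Real.log_div (Real.exp_pos _).ne' he.ne', Real.log_exp, A_eq]
  have sP : Summable (fun p : Nat.Primes => (p.1 : ℝ) ^ (-(1 + e))) :=
    Nat.Primes.summable_rpow.2 (by linarith)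
  have sD : Summable (fun p : Nat.Primes =>
      hf ((p.1 : ℝ)⁻¹) - hf ((p.1 : ℝ) ^ (-(1 + e)))) :=
    (fP_summable.mul_left e).of_nonneg_of_le (fun p => (prime_bds p he).1.le)
      (fun p => (prime_bds p he).2)
  have sH : Summable (fun p : Nat.Primes => hf ((p.1 : ℝ) ^ (-(1 + e)))) := by
    refine (hf_inv_summable.sub sD).congr ?_
    intro p; ring
  have hZ := log_Z (s := 1 + e) (by linarith)
  have hZ2 : Real.log (Z (1 + e)) = ∑' p : Nat.Primes, hf ((p.1 : ℝ) ^ (-(1 + e)))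
      + primeZeta (1 + e) := by
    rw [hZ, primeZeta, ← sH.tsum_add sP]
    apply tsum_congr
    intro p; unfold hf; ring
  have hD := hf_inv_summable.tsum_sub sH
  have dpos : 0 < ∑' p : Nat.Primes, (hf ((p.1 : ℝ)⁻¹) - hf ((p.1 : ℝ) ^ (-(1 + e)))) :=
    sD.tsum_pos (fun p => (prime_bds p he).1.le) ⟨2, Nat.prime_two⟩ (prime_bds _ he).1
  have dle : ∑' p : Nat.Primes, (hf ((p.1 : ℝ)⁻¹) - hf ((p.1 : ℝ) ^ (-(1 + e)))) ≤ e * 0.8 := by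
    calc _ ≤ ∑' p : Nat.Primes, e * fP p.1 :=
          sD.tsum_le_tsum (fun p => (prime_bds p he).2) (fP_summable.mul_left e)
      _ = e * ∑' p : Nat.Primes, fP p.1 := tsum_mul_left
      _ ≤ _ := by gcongr; exact fP_tsum
  have zl := Z_low he
  have zu := Z_log_up he he1
  have zpos : 0 < Z (1 + e) := by
    by_contra h
    push Not at h
    nlinarith
  have zl2 := Real.log_nonneg zl
  rw [Real.log_mul he.ne' zpos.ne'] at zl2 zu
  constructor
  · linarith
  · linarith
end

section
/- For every integer k ≥ 21 and every real h with 0 ≤ h ≤ 1.05, f(N_k, h) > 0.98. -/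
open MeasureTheory Real

namespace S19
open scoped ENNReal ArithmeticFunction.Omega
open Finset

lemma log_bound {x : ℝ} (h0 : 0 ≤ x) (h1 : x < 1) :
    -Real.log (1 - x) ≤ x + x ^ 2 / (2 * (1 - x)) := by
  have hpos : 0 < 1 - x := by linarith
  rw [← Real.log_inv]
  have hy : 1 ≤ (1 - x)⁻¹ := (one_le_inv₀ hpos).2 (by linarith)
  have h := Real.self_le_sinh_iff.2 (Real.log_nonneg hy)
  rw [Real.sinh_log (by positivity)] at h
  refine h.trans (le_of_eq ?_)
  field_simp
  ring

lemma tele_lo (u : ℝ) (hu : 0 < u) (n : ℕ) (hn : 1 ≤ n) :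
    (n : ℝ) ^ (-u) - ((n + 1 : ℕ) : ℝ) ^ (-u) ≤ u * (n : ℝ) ^ (-(1 + u)) := by
  have hn0 : (0 : ℝ) < n := by exact_mod_cast hn
  have e1 : ((n + 1 : ℕ) : ℝ) = n * (1 + 1 / n) := by push_cast; field_simp
  have h1 : (0 : ℝ) < 1 + 1 / n := by positivity
  rw [e1, Real.mul_rpow hn0.le h1.le, neg_add, Real.rpow_add hn0, Real.rpow_neg_one,
    Real.rpow_def_of_pos h1]
  have h2 := Real.add_one_le_exp (Real.log (1 + 1 / n) * -u)
  have h3 := Real.log_le_sub_one_of_pos h1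
  have h4 : (0 : ℝ) < (n : ℝ) ^ (-u) := by positivity
  have h5 : 1 - u * (n : ℝ)⁻¹ ≤ Real.exp (Real.log (1 + 1 / n) * -u) := by
    have : Real.log (1 + 1 / n) ≤ (n : ℝ)⁻¹ := by rw [one_div] at *; linarith
    nlinarith
  nlinarith

lemma tele_hi (u : ℝ) (hu : 0 < u) (n : ℕ) (hn : 1 ≤ n) :
    u * ((n + 1 : ℕ) : ℝ) ^ (-(1 + u)) ≤ (n : ℝ) ^ (-u) - ((n + 1 : ℕ) : ℝ) ^ (-u) := by
  have hn0 : (0 : ℝ) < n := by exact_mod_cast hn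
  set m : ℝ := ((n + 1 : ℕ) : ℝ) with hm
  have hm' : m = n + 1 := by simp [hm]
  have hm0 : 0 < m := by rw [hm']; positivity
  have e1 : (n : ℝ) = m * (1 - 1 / m) := by rw [hm']; field_simp; ring
  have h1 : (0 : ℝ) < 1 - 1 / m := by
    rw [sub_pos, div_lt_one hm0]; linarith
  rw [e1, Real.mul_rpow hm0.le h1.le, neg_add, Real.rpow_add hm0, Real.rpow_neg_one,
    Real.rpow_def_of_pos h1]
  have h2 := Real.add_one_le_exp (Real.log (1 - 1 / m) * -u)
  have h3 := Real.log_le_sub_one_of_pos h1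
  have h4 : (0 : ℝ) < m ^ (-u) := by positivity
  have h5 : 1 + u * m⁻¹ ≤ Real.exp (Real.log (1 - 1 / m) * -u) := by
    have : Real.log (1 - 1 / m) ≤ -m⁻¹ := by rw [one_div] at *; linarith
    nlinarith
  nlinarith

/-- the real zeta sum at `1+u` -/
noncomputable def Z (u : ℝ) : ℝ := ∑' n : ℕ, (n : ℝ) ^ (-(1 + u))

lemma Zsummable {u : ℝ} (hu : 0 < u) : Summable fun n : ℕ => (n : ℝ) ^ (-(1 + u)) :=
  Real.summable_nat_rpow.2 (by linarith)

lemma sum_lo (u : ℝ) (hu : 0 < u) (N : ℕ) :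
    1 - ((N + 1 : ℕ) : ℝ) ^ (-u) ≤ u * ∑ n ∈ range (N + 1), (n : ℝ) ^ (-(1 + u)) := by
  induction N with
  | zero => simp [Real.zero_rpow (by linarith : -u + -1 ≠ 0)]
  | succ N ih =>
    rw [sum_range_succ, mul_add]
    have := tele_lo u hu (N + 1) (by omega)
    linarith

lemma sum_hi (u : ℝ) (hu : 0 < u) (N : ℕ) :
    u * ∑ n ∈ range (N + 2), (n : ℝ) ^ (-(1 + u)) ≤ u + 1 - ((N + 1 : ℕ) : ℝ) ^ (-u) := by
  induction N with
  | zero =>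
    have : (0 : ℝ) ^ (-(1 + u)) = 0 := Real.zero_rpow (by linarith)
    simp [sum_range_succ]
    have : (0 : ℝ) ^ (-u + -1) = 0 := Real.zero_rpow (by linarith)
    have : (0 : ℝ) ^ (-1 + -u) = 0 := Real.zero_rpow (by linarith)
    simp [*]
  | succ N ih =>
    rw [sum_range_succ, mul_add]
    have := tele_hi u hu (N + 1) (by omega)
    linarith

lemma Z_lo {u : ℝ} (hu : 0 < u) : 1 / u ≤ Z u := by
  rw [div_le_iff₀' hu]
  have h1 : Filter.Tendsto (fun N : ℕ => 1 - ((N + 1 : ℕ) : ℝ) ^ (-u)) Filter.atTop (nhds (1 - 0)) := by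
    refine tendsto_const_nhds.sub ?_
    exact (tendsto_rpow_neg_atTop hu).comp
      (tendsto_natCast_atTop_atTop.comp (Filter.tendsto_add_atTop_nat 1))
  rw [sub_zero] at h1
  refine le_of_tendsto h1 (Filter.Eventually.of_forall fun N => (sum_lo u hu N).trans ?_)
  gcongr
  exact (Zsummable hu).sum_le_tsum _ (fun i _ => by positivity)

lemma Z_hi {u : ℝ} (hu : 0 < u) : Z u ≤ 1 + 1 / u := by
  refine Real.tsum_le_of_sum_range_le (fun n => by positivity) fun N => ?_
  have h := sum_hi u hu N
  have h0 : (0 : ℝ) < ((N + 1 : ℕ) : ℝ) ^ (-u) := by positivity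
  have h2 : ∑ n ∈ range N, (n : ℝ) ^ (-(1 + u)) ≤ ∑ n ∈ range (N + 2), (n : ℝ) ^ (-(1 + u)) :=
    sum_le_sum_of_subset_of_nonneg (range_subset_range.2 (by omega)) (fun i _ _ => by positivity)
  have h3 : u * ∑ n ∈ range (N + 2), (n : ℝ) ^ (-(1 + u)) ≤ u * (1 + 1 / u) := by
    have : u * (1 + 1 / u) = u + 1 := by field_simp
    linarith
  exact h2.trans (le_of_mul_le_mul_left h3 hu)

/-- `n ↦ n^{-(1+u)}` as a completely multiplicative function -/
noncomputable def nf (u : ℝ) (hu : 0 < u) : ℕ →*₀ ℝ where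
  toFun n := (n : ℝ) ^ (-(1 + u))
  map_zero' := by
    rw [Nat.cast_zero]; exact Real.zero_rpow (by linarith)
  map_one' := by simp
  map_mul' a b := by
    rw [Nat.cast_mul, Real.mul_rpow (by positivity) (by positivity)]

lemma euler {u : ℝ} (hu : 0 < u) :
    Filter.Tendsto (fun n : ℕ => ∏ p ∈ Nat.primesBelow n, (1 - (p : ℝ) ^ (-(1 + u)))⁻¹)
      Filter.atTop (nhds (Z u)) := by
  refine EulerProduct.eulerProduct_completely_multiplicative (f := nf u hu) ?_
  exact (Zsummable hu).norm

lemma rpow_le_inv {u : ℝ} (hu : 0 < u) {n : ℕ} (hn : 1 ≤ n) : (n : ℝ) ^ (-(1 + u)) ≤ 1 / n := by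
  have hn0 : (1 : ℝ) ≤ n := by exact_mod_cast hn
  rw [one_div, ← Real.rpow_neg_one]
  exact Real.rpow_le_rpow_of_exponent_le hn0 (by linarith)

lemma rpow_lt_one {u : ℝ} (hu : 0 < u) {n : ℕ} (hn : 2 ≤ n) : (n : ℝ) ^ (-(1 + u)) < 1 := by
  refine (rpow_le_inv hu (by omega)).trans_lt ?_
  have hn0 : (2 : ℝ) ≤ n := by exact_mod_cast hn
  rw [div_lt_one (by linarith)]; linarith


lemma sum_primes_le {u : ℝ} (hu : 0 < u) (n : ℕ) :
    ∑ p ∈ Nat.primesBelow n, (p : ℝ) ^ (-(1 + u)) ≤ Real.log (Z u) := by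
  have hZ : 0 < Z u := lt_of_lt_of_le (by positivity) (Z_lo hu)
  rw [Real.le_log_iff_exp_le hZ]
  refine ge_of_tendsto (euler hu) ?_
  filter_upwards [Filter.eventually_ge_atTop n] with m hm
  have h1 : ∑ p ∈ Nat.primesBelow n, (p : ℝ) ^ (-(1 + u)) ≤
      ∑ p ∈ Nat.primesBelow m, (p : ℝ) ^ (-(1 + u)) := by
    refine sum_le_sum_of_subset_of_nonneg ?_ (fun i _ _ => by positivity)
    intro p hp
    rw [Nat.mem_primesBelow] at *
    exact ⟨by omega, hp.2⟩
  refine (Real.exp_le_exp.2 h1).trans ?_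
  rw [Real.exp_sum]
  refine prod_le_prod (fun i _ => (Real.exp_pos _).le) fun p hp => ?_
  have hp2 := (Nat.mem_primesBelow.1 hp).2.two_le
  have hlt := rpow_lt_one hu hp2
  rw [le_inv_comm₀ (Real.exp_pos _) (by linarith), ← Real.exp_neg]
  have := Real.add_one_le_exp (-((p : ℝ) ^ (-(1 + u))))
  linarith

/-- weight -/
noncomputable def w (u : ℝ) (n : ℕ) : ℝ≥0∞ := ENNReal.ofReal ((n : ℝ) ^ (-(1 + u)))

lemma w_mul (u : ℝ) (a b : ℕ) : w u (a * b) = w u a * w u b := by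
  unfold w
  rw [Nat.cast_mul, Real.mul_rpow (by positivity) (by positivity),
    ENNReal.ofReal_mul (by positivity)]

lemma P_hi {u : ℝ} (hu : 0 < u) :
    ∑' p : Nat.Primes, w u p ≤ ENNReal.ofReal (Real.log (1 + 1 / u)) := by
  have hs : Summable fun p : Nat.Primes => ((p : ℕ) : ℝ) ^ (-(1 + u)) :=
    (Zsummable hu).subtype _
  unfold w
  rw [← ENNReal.ofReal_tsum_of_nonneg (fun p => by positivity) hs]
  refine ENNReal.ofReal_le_ofReal ?_
  refine hs.tsum_le_of_sum_le fun F => ?_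
  have hZ : 0 < Z u := lt_of_lt_of_le (by positivity) (Z_lo hu)
  refine le_trans ?_ (Real.log_le_log hZ (Z_hi hu))
  refine le_trans ?_ (sum_primes_le hu (F.sup (fun p : Nat.Primes => (p : ℕ)) + 1))
  rw [← sum_image (s := F) (g := fun p : Nat.Primes => (p : ℕ)) (f := fun p : ℕ => (p : ℝ) ^ (-(1 + u)))
    (fun a _ b _ h => Subtype.ext h)]
  refine sum_le_sum_of_subset_of_nonneg ?_ (fun i _ _ => by positivity)
  intro p hp
  obtain ⟨q, hq, rfl⟩ := mem_image.1 hp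
  rw [Nat.mem_primesBelow]
  exact ⟨Nat.lt_succ_of_le (le_sup (f := fun p : Nat.Primes => (p : ℕ)) hq), q.2⟩

/-- large primes -/
def Q : Set ℕ := {p | p.Prime ∧ 37 ≤ p}

/-- The constant. -/
noncomputable def B : ℝ := ∑ p ∈ Nat.primesBelow 37, -Real.log (1 - 1 / (p : ℝ)) + 1 / 72

lemma tele36 (n : ℕ) :
    ∑ i ∈ Finset.Ico 37 n, 1 / (2 * (i : ℝ) * (i - 1)) ≤ 1 / 72 := by
  rcases lt_or_ge n 37 with h | h
  · rw [Finset.Ico_eq_empty (by omega)]; norm_num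
  have : ∑ i ∈ Finset.Ico 37 n, 1 / (2 * (i : ℝ) * (i - 1)) = 1 / 72 - 1 / (2 * ((n : ℝ) - 1)) := by
    induction n, h using Nat.le_induction with
    | base => norm_num
    | succ n hn ih =>
      rw [Finset.sum_Ico_succ_top hn, ih]
      have : (37 : ℝ) ≤ n := by exact_mod_cast hn
      have h1 : (n : ℝ) - 1 ≠ 0 := by linarith
      have h2 : (n : ℝ) ≠ 0 := by linarith
      push_cast
      rw [add_sub_cancel_right]
      field_simp
      ring
  rw [this]
  have : (37 : ℝ) ≤ n := by exact_mod_cast h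
  have : 0 ≤ 1 / (2 * ((n : ℝ) - 1)) := by
    apply div_nonneg <;> linarith
  linarith

lemma P_lo {u : ℝ} (hu : 0 < u) :
    ENNReal.ofReal (Real.log (1 / u) - B) ≤ ∑' p : Q, w u p := by
  have hs : Summable fun p : Q => ((p : ℕ) : ℝ) ^ (-(1 + u)) :=
    (Zsummable hu).subtype _
  unfold w
  rw [← ENNReal.ofReal_tsum_of_nonneg (fun p => by positivity) hs]
  refine ENNReal.ofReal_le_ofReal ?_
  set T := ∑' p : Q, ((p : ℕ) : ℝ) ^ (-(1 + u)) with hT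
  have key : Z u ≤ Real.exp (B + T) := by
    refine le_of_tendsto (euler hu) ?_
    filter_upwards [Filter.eventually_ge_atTop 37] with n hn
    have e1 : ∀ p ∈ Nat.primesBelow n, (1 - (p : ℝ) ^ (-(1 + u)))⁻¹ =
        Real.exp (-Real.log (1 - (p : ℝ) ^ (-(1 + u)))) := fun p hp => by
      have hlt := rpow_lt_one hu (Nat.mem_primesBelow.1 hp).2.two_le
      rw [Real.exp_neg, Real.exp_log (by linarith)]
    rw [prod_congr rfl e1, ← Real.exp_sum, Real.exp_le_exp]
    have hsub : Nat.primesBelow 37 ⊆ Nat.primesBelow n := fun p hp => by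
      rw [Nat.mem_primesBelow] at *
      exact ⟨by omega, hp.2⟩
    rw [← sum_sdiff hsub]
    have hmem : ∀ p ∈ Nat.primesBelow n \ Nat.primesBelow 37, p.Prime ∧ 37 ≤ p ∧ p < n := by
      intro p hp
      rw [mem_sdiff, Nat.mem_primesBelow, Nat.mem_primesBelow] at hp
      refine ⟨hp.1.2, ?_, hp.1.1⟩
      by_contra hh
      exact hp.2 ⟨by omega, hp.1.2⟩
    have p1 : ∑ p ∈ Nat.primesBelow 37, -Real.log (1 - (p : ℝ) ^ (-(1 + u))) ≤
        ∑ p ∈ Nat.primesBelow 37, -Real.log (1 - 1 / (p : ℝ)) := by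
      refine sum_le_sum fun p hp => ?_
      have h2 : 2 ≤ p := (Nat.mem_primesBelow.1 hp).2.two_le
      have h2' : (2 : ℝ) ≤ p := by exact_mod_cast h2
      have h3 := rpow_le_inv hu (n := p) (by omega)
      have h4 : 1 / (p : ℝ) < 1 := by rw [div_lt_one (by linarith)]; linarith
      have := Real.log_le_log (x := 1 - 1 / (p : ℝ)) (y := 1 - (p : ℝ) ^ (-(1 + u))) (by linarith) (by linarith)
      linarith
    have p2 : ∑ p ∈ Nat.primesBelow n \ Nat.primesBelow 37, -Real.log (1 - (p : ℝ) ^ (-(1 + u))) ≤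
        ∑ p ∈ Nat.primesBelow n \ Nat.primesBelow 37,
          ((p : ℝ) ^ (-(1 + u)) + 1 / (2 * (p : ℝ) * (p - 1))) := by
      refine sum_le_sum fun p hp => ?_
      obtain ⟨-, h37, -⟩ := hmem p hp
      have h2' : (37 : ℝ) ≤ p := by exact_mod_cast h37
      have h3 := rpow_le_inv hu (n := p) (by omega)
      have h4 : 1 / (p : ℝ) < 1 := by rw [div_lt_one (by linarith)]; linarith
      have hx0 : 0 ≤ (p : ℝ) ^ (-(1 + u)) := by positivity
      refine (log_bound hx0 (by linarith)).trans ?_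
      refine add_le_add le_rfl ?_
      calc ((p : ℝ) ^ (-(1 + u))) ^ 2 / (2 * (1 - (p : ℝ) ^ (-(1 + u)))) ≤
          (1 / (p : ℝ)) ^ 2 / (2 * (1 - 1 / (p : ℝ))) := by
            have : 0 < 1 - 1 / (p : ℝ) := by linarith
            gcongr
        _ = 1 / (2 * (p : ℝ) * (p - 1)) := by
            have : (p : ℝ) - 1 ≠ 0 := by linarith
            field_simp
    rw [sum_add_distrib] at p2
    have p3 : ∑ p ∈ Nat.primesBelow n \ Nat.primesBelow 37, 1 / (2 * (p : ℝ) * (p - 1)) ≤ 1 / 72 := by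
      refine le_trans ?_ (tele36 n)
      refine sum_le_sum_of_subset_of_nonneg (fun p hp => ?_) fun i hi _ => ?_
      · obtain ⟨-, h37, hl⟩ := hmem p hp
        exact Finset.mem_Ico.2 ⟨h37, hl⟩
      · have : (37 : ℝ) ≤ i := by exact_mod_cast (Finset.mem_Ico.1 hi).1
        have : (0 : ℝ) ≤ i - 1 := by linarith
        positivity
    have p4 : ∑ p ∈ Nat.primesBelow n \ Nat.primesBelow 37, (p : ℝ) ^ (-(1 + u)) ≤ T := by
      rw [hT, tsum_subtype Q (fun p : ℕ => (p : ℝ) ^ (-(1 + u)))]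
      have e : ∀ p ∈ Nat.primesBelow n \ Nat.primesBelow 37, (p : ℝ) ^ (-(1 + u)) =
          Q.indicator (fun p : ℕ => (p : ℝ) ^ (-(1 + u))) p := fun p hp => by
        rw [Set.indicator_of_mem]
        exact ⟨(hmem p hp).1, (hmem p hp).2.1⟩
      rw [sum_congr rfl e]
      refine ((Zsummable hu).indicator Q).sum_le_tsum _ fun i _ => ?_
      exact Set.indicator_nonneg (fun _ _ => by positivity) _
    unfold B
    linarith
  have h := (Z_lo hu).trans key
  rw [← Real.log_le_iff_le_exp (by positivity)] at h
  linarith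

/-- rough numbers with `i` prime factors -/
def R (i : ℕ) : Set ℕ := {r | r ≠ 0 ∧ Ω r = i ∧ ∀ p, p.Prime → p ∣ r → 37 ≤ p}

lemma card_primeFactors_le (n : ℕ) : n.primeFactors.card ≤ Ω n := by
  rw [ArithmeticFunction.cardFactors_apply, Nat.primeFactors]
  exact List.toFinset_card_le _

lemma mulQR {i p r : ℕ} (hp : p ∈ Q) (hr : r ∈ R i) : p * r ∈ R (i + 1) := by
  refine ⟨mul_ne_zero hp.1.ne_zero hr.1, ?_, ?_⟩
  · rw [ArithmeticFunction.cardFactors_mul hp.1.ne_zero hr.1, hr.2.1,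
      ArithmeticFunction.cardFactors_eq_one_iff_prime.2 hp.1, add_comm]
  · intro q hq hd
    rcases hq.dvd_mul.1 hd with h | h
    · rw [(Nat.prime_dvd_prime_iff_eq hq hp.1).1 h]; exact hp.2
    · exact hr.2.2 q hq h

lemma Rstep (u : ℝ) (i : ℕ) :
    (∑' p : Q, w u p) * (∑' r : R i, w u r) ≤ (i + 1 : ℕ) * ∑' r : R (i + 1), w u r := by
  let φ : Q × R i → Σ r : R (i + 1), (r.1.primeFactors : Set ℕ) := fun x =>
    ⟨⟨x.1.1 * x.2.1, mulQR x.1.2 x.2.2⟩, ⟨x.1.1, by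
      simp only [Finset.mem_coe, Nat.mem_primeFactors]
      exact ⟨x.1.2.1, dvd_mul_right _ _, (mulQR x.1.2 x.2.2).1⟩⟩⟩
  let e : (Σ r : R (i + 1), (r.1.primeFactors : Set ℕ)) → ℕ × ℕ := fun y => (y.1.1, y.2.1)
  have hφ : Function.Injective φ := by
    rintro ⟨⟨p, hp⟩, ⟨r, hr⟩⟩ ⟨⟨p', hp'⟩, ⟨r', hr'⟩⟩ h
    have h' := congrArg e h
    simp only [e, φ, Prod.mk.injEq] at h'
    obtain ⟨h1, rfl⟩ := h'
    have : r = r' := Nat.eq_of_mul_eq_mul_left hp.1.pos h1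
    subst this
    rfl
  calc (∑' p : Q, w u p) * (∑' r : R i, w u r)
      = ∑' x : Q × R i, w u (φ x).1 := by
        rw [ENNReal.tsum_prod', ← ENNReal.tsum_mul_right]
        refine tsum_congr fun p => ?_
        rw [← ENNReal.tsum_mul_left]
        refine tsum_congr fun r => ?_
        rw [← w_mul]
    _ ≤ ∑' y : (Σ r : R (i + 1), (r.1.primeFactors : Set ℕ)), w u y.1 :=
        ENNReal.tsum_comp_le_tsum_of_injective hφ (fun y => w u y.1)
    _ = ∑' r : R (i + 1), ∑' _p : (r.1.primeFactors : Set ℕ), w u r :=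
        ENNReal.tsum_sigma (fun (r : R (i + 1)) (_ : (r.1.primeFactors : Set ℕ)) => w u r)
    _ ≤ ∑' r : R (i + 1), (i + 1 : ℕ) * w u r := by
        refine ENNReal.tsum_le_tsum fun r => ?_
        have : (∑' _p : (r.1.primeFactors : Set ℕ), w u r) = (r.1.primeFactors.card : ℕ) * w u r := by
          rw [Finset.tsum_subtype' r.1.primeFactors (fun _ => w u r)]
          simp
        rw [this]
        gcongr
        exact (card_primeFactors_le _).trans r.2.2.1.le
    _ = _ := ENNReal.tsum_mul_left

lemma Rlo (u : ℝ) (i : ℕ) :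
    (∑' p : Q, w u p) ^ i ≤ (i.factorial : ℝ≥0∞) * ∑' r : R i, w u r := by
  induction i with
  | zero =>
    have h1 : (1 : ℕ) ∈ R 0 := ⟨one_ne_zero, by simp, fun p hp h => by
      exact absurd (Nat.dvd_one.1 h) hp.ne_one⟩
    have := ENNReal.le_tsum (f := fun r : R 0 => w u r) ⟨1, h1⟩
    simpa [w] using this
  | succ i ih =>
    calc (∑' p : Q, w u p) ^ (i + 1) = (∑' p : Q, w u p) * (∑' p : Q, w u p) ^ i := pow_succ' _ _
      _ ≤ (∑' p : Q, w u p) * ((i.factorial : ℝ≥0∞) * ∑' r : R i, w u r) := by gcongr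
      _ = (i.factorial : ℝ≥0∞) * ((∑' p : Q, w u p) * ∑' r : R i, w u r) := by ring
      _ ≤ (i.factorial : ℝ≥0∞) * ((i + 1 : ℕ) * ∑' r : R (i + 1), w u r) := by
        exact mul_le_mul_right (Rstep u i) _
      _ = _ := by rw [Nat.factorial_succ]; push_cast; ring

lemma mem_AP {k n : ℕ} : n ∈ almostPrimes k ↔ n ≠ 0 ∧ Ω n = k := by
  rw [ArithmeticFunction.cardFactors_apply, ← Nat.pos_iff_ne_zero]; rfl

lemma APstep (u : ℝ) (k : ℕ) :
    ∑' n : almostPrimes (k + 1), w u n ≤ (∑' p : Nat.Primes, w u p) * ∑' n : almostPrimes k, w u n := by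
  let φ : Nat.Primes × almostPrimes k → almostPrimes (k + 1) := fun x => ⟨x.1.1 * x.2.1, by
    have h := mem_AP.1 x.2.2
    rw [mem_AP]
    refine ⟨mul_ne_zero x.1.2.ne_zero h.1, ?_⟩
    rw [ArithmeticFunction.cardFactors_mul x.1.2.ne_zero h.1, h.2,
      ArithmeticFunction.cardFactors_eq_one_iff_prime.2 x.1.2, add_comm]⟩
  have hφ : Function.Surjective φ := by
    rintro ⟨n, hn⟩
    have h := mem_AP.1 hn
    have hne : n ≠ 1 := by rintro rfl; simp at h
    obtain ⟨p, hp, m, rfl⟩ := Nat.exists_prime_and_dvd hne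
    have hm : m ≠ 0 := by rintro rfl; simp at h
    have h2 := h.2
    rw [ArithmeticFunction.cardFactors_mul hp.ne_zero hm,
      ArithmeticFunction.cardFactors_eq_one_iff_prime.2 hp] at h2
    exact ⟨⟨⟨p, hp⟩, ⟨m, mem_AP.2 ⟨hm, by omega⟩⟩⟩, rfl⟩
  refine (ENNReal.tsum_le_tsum_comp_of_surjective hφ (fun n => w u n)).trans (le_of_eq ?_)
  rw [ENNReal.tsum_prod', ← ENNReal.tsum_mul_right]
  refine tsum_congr fun p => ?_
  rw [← ENNReal.tsum_mul_left]
  refine tsum_congr fun r => ?_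
  rw [← w_mul]

lemma APhi (u : ℝ) (k : ℕ) :
    ∑' n : almostPrimes k, w u n ≤ (∑' p : Nat.Primes, w u p) ^ k := by
  induction k with
  | zero =>
    have h0 : almostPrimes 0 = {1} := by
      ext n
      rw [mem_AP, ArithmeticFunction.cardFactors_eq_zero_iff_eq_zero_or_one]
      simp
      omega
    rw [h0]
    simp [w]
  | succ k ih =>
    refine (APstep u k).trans ?_
    rw [pow_succ']
    gcongr

lemma ofReal_integral_le {μ : Measure ℝ} {f : ℝ → ℝ} (hf : Integrable f μ) :
    ENNReal.ofReal (∫ x, f x ∂μ) ≤ ∫⁻ x, ENNReal.ofReal (f x) ∂μ := by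
  have h1 : ∫ x, f x ∂μ ≤ ∫ x, max (f x) 0 ∂μ :=
    integral_mono hf hf.pos_part (fun x => le_max_left _ _)
  refine (ENNReal.ofReal_le_ofReal h1).trans ?_
  rw [ofReal_integral_eq_lintegral_ofReal hf.pos_part (Filter.Eventually.of_forall fun x => le_max_right _ _)]
  refine lintegral_mono fun x => ?_
  simp

lemma ofReal_tsum_le {α : Type*} {f : α → ℝ} (hf : Summable f) :
    ENNReal.ofReal (∑' x, f x) ≤ ∑' x, ENNReal.ofReal (f x) := by
  have hm : Summable fun x => max (f x) 0 := by
    refine Summable.of_nonneg_of_le (fun x => le_max_right _ _) (fun x => ?_) hf.abs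
    exact max_le (le_abs_self _) (abs_nonneg _)
  have h1 : ∑' x, f x ≤ ∑' x, max (f x) 0 := hf.tsum_le_tsum (fun x => le_max_left _ _) hm
  refine (ENNReal.ofReal_le_ofReal h1).trans ?_
  rw [ENNReal.ofReal_tsum_of_nonneg (fun x => le_max_right _ _) hm]
  refine ENNReal.tsum_le_tsum fun x => ?_
  simp

lemma lint_exp {L : ℝ} (hL : 0 < L) :
    ∫⁻ u in Set.Ioi (0 : ℝ), ENNReal.ofReal (Real.exp (-L * u)) = ENNReal.ofReal (1 / L) := by
  rw [← ofReal_integral_eq_lintegral_ofReal (integrableOn_exp_mul_Ioi (by linarith) 0)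
    (Filter.Eventually.of_forall fun x => (Real.exp_pos _).le),
    integral_exp_mul_Ioi (by linarith) 0]
  simp

lemma w_exp {r : ℕ} (hr : r ≠ 0) (H u : ℝ) :
    w u r * ENNReal.ofReal (Real.exp (-H * u)) =
      ENNReal.ofReal (1 / (r : ℝ)) * ENNReal.ofReal (Real.exp (-(Real.log r + H) * u)) := by
  have hr0 : (0 : ℝ) < r := by positivity
  unfold w
  rw [← ENNReal.ofReal_mul (by positivity), ← ENNReal.ofReal_mul (by positivity)]
  congr 1
  rw [neg_add, Real.rpow_add hr0, Real.rpow_neg_one, Real.rpow_def_of_pos hr0, mul_assoc,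
    ← Real.exp_add, one_div]
  congr 2
  ring

lemma w_meas (r : ℕ) : Measurable fun u => w u r := by
  unfold w
  rcases eq_or_ne r 0 with rfl | hr
  · have : ∀ u : ℝ, ((0 : ℕ) : ℝ) ^ (-(1 + u)) = if u = -1 then 1 else 0 := by
      intro u
      split_ifs with h
      · simp [h]
      · rw [Nat.cast_zero, Real.zero_rpow]
        intro h'; apply h; linarith
    simp only [this]
    exact (Measurable.ite (measurableSet_singleton _) measurable_const measurable_const).ennreal_ofReal
  · have hr0 : (0 : ℝ) < r := by positivity
    refine Measurable.ennreal_ofReal ?_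
    refine Continuous.measurable ?_
    exact Continuous.rpow continuous_const (by fun_prop) (fun _ => Or.inl hr0.ne')

lemma term_eq {r : ℕ} (hr : r ≠ 0) {H : ℝ} (hH : 0 < H) :
    ENNReal.ofReal (1 / ((r : ℝ) * (Real.log r + H))) =
      ∫⁻ u in Set.Ioi (0 : ℝ), w u r * ENNReal.ofReal (Real.exp (-H * u)) := by
  have h1 : (1 : ℝ) ≤ r := by exact_mod_cast Nat.one_le_iff_ne_zero.2 hr
  have hL : 0 < Real.log r + H := by have := Real.log_nonneg h1; linarith
  simp only [w_exp hr]
  rw [lintegral_const_mul _ (by fun_prop), lint_exp hL, ← ENNReal.ofReal_mul (by positivity)]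
  congr 1
  field_simp

/-- `c = exp (-B)` -/
noncomputable def c : ℝ := Real.exp (-B)

lemma c_pos : 0 < c := Real.exp_pos _

lemma c_image : (fun t : ℝ => c * Real.exp (-t)) '' Set.Ioi 0 = Set.Ioo 0 c := by
  have hc := c_pos
  ext x
  constructor
  · rintro ⟨t, ht, rfl⟩
    refine ⟨by positivity, ?_⟩
    have : Real.exp (-t) < 1 := by
      rw [Real.exp_lt_one_iff]; simpa using ht
    show c * Real.exp (-t) < c
    nlinarith
  · rintro ⟨h0, h1⟩
    refine ⟨-Real.log (x / c), ?_, ?_⟩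
    · have : Real.log (x / c) < 0 := Real.log_neg (by positivity) (by rwa [div_lt_one hc])
      simpa using this
    · simp only [neg_neg]
      rw [Real.exp_log (by positivity)]
      field_simp

lemma gamma_int (i : ℕ) {a : ℝ} (ha : 0 < a) :
    IntegrableOn (fun t : ℝ => t ^ i * Real.exp (-(a * t))) (Set.Ioi 0) ∧
    ∫ t in Set.Ioi (0 : ℝ), t ^ i * Real.exp (-(a * t)) = (1 / a) ^ (i + 1) * i.factorial := by
  constructor
  · have := integrableOn_rpow_mul_exp_neg_mul_rpow (p := 1) (s := i) (b := a)
      (by have : (0 : ℝ) ≤ i := by positivity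
          linarith) one_pos ha
    simpa [Real.rpow_natCast] using this
  · have := Real.integral_rpow_mul_exp_neg_mul_Ioi (a := (i + 1 : ℕ)) (r := a) (by positivity) ha
    rw [Real.rpow_natCast] at this
    push_cast at this
    rw [Real.Gamma_nat_eq_factorial] at this
    simpa [Real.rpow_natCast] using this

lemma rough_lo (i : ℕ) {H : ℝ} (hH : 0 < H) :
    ENNReal.ofReal (c * (1 - H * c * (1 / 2) ^ (i + 1))) ≤
      ∑' r : R i, ENNReal.ofReal (1 / ((r : ℝ) * (Real.log r + H))) := by
  have hc := c_pos
  have e1 : ∑' r : R i, ENNReal.ofReal (1 / ((r : ℝ) * (Real.log r + H))) =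
      ∫⁻ u in Set.Ioi (0 : ℝ), (∑' r : R i, w u r) * ENNReal.ofReal (Real.exp (-H * u)) := by
    simp only [← ENNReal.tsum_mul_right]
    rw [lintegral_tsum]
    · exact tsum_congr fun r => term_eq r.2.1 hH
    · intro r
      have := w_meas r
      exact Measurable.aemeasurable (by fun_prop)
  rw [e1]
  have e2 : ∫⁻ u in Set.Ioo (0 : ℝ) c,
      ENNReal.ofReal ((Real.log (1 / u) - B) ^ i / i.factorial * Real.exp (-H * u)) ≤
      ∫⁻ u in Set.Ioi (0 : ℝ), (∑' r : R i, w u r) * ENNReal.ofReal (Real.exp (-H * u)) := by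
    refine le_trans ?_ (lintegral_mono_set (s := Set.Ioo 0 c) Set.Ioo_subset_Ioi_self)
    refine setLIntegral_mono' measurableSet_Ioo fun u hu => ?_
    have hB : 0 ≤ Real.log (1 / u) - B := by
      have := Real.log_le_log hu.1 hu.2.le
      rw [c, Real.log_exp] at this
      rw [one_div, Real.log_inv]
      linarith
    rw [ENNReal.ofReal_mul (by positivity)]
    gcongr
    rw [ENNReal.ofReal_div_of_pos (by positivity), ENNReal.ofReal_pow hB, ENNReal.ofReal_natCast]
    refine ENNReal.div_le_of_le_mul' ?_
    refine le_trans ?_ (Rlo u i)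
    gcongr
    exact P_lo hu.1
  refine le_trans ?_ e2
  rw [← c_image, lintegral_image_eq_lintegral_abs_deriv_mul (f' := fun t => c * (Real.exp (-t) * (-1)))
    measurableSet_Ioi]
  rotate_left
  · intro x _
    exact (((hasDerivAt_neg x).exp).const_mul c).hasDerivWithinAt
  · intro x _ y _ hxy
    have : Real.exp (-x) = Real.exp (-y) := mul_left_cancel₀ hc.ne' hxy
    have := Real.exp_injective this
    linarith
  obtain ⟨i1, v1⟩ := gamma_int i (a := 1) one_pos
  obtain ⟨i2, v2⟩ := gamma_int i (a := 2) two_pos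
  let F : ℝ → ℝ := fun t => c / i.factorial * (t ^ i * Real.exp (-(1 * t))) -
    c * (H * c) / i.factorial * (t ^ i * Real.exp (-(2 * t)))
  have iF : IntegrableOn F (Set.Ioi 0) := (i1.const_mul _).sub (i2.const_mul _)
  have vF : ∫ t in Set.Ioi (0 : ℝ), F t = c * (1 - H * c * (1 / 2) ^ (i + 1)) := by
    simp only [F]
    rw [integral_sub (i1.const_mul _) (i2.const_mul _), integral_const_mul, integral_const_mul, v1, v2]
    have : (i.factorial : ℝ) ≠ 0 := by positivity
    field_simp
    simp
  rw [← vF]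
  refine (ofReal_integral_le iF).trans ?_
  refine setLIntegral_mono' measurableSet_Ioi fun t ht => ?_
  rw [← ENNReal.ofReal_mul (abs_nonneg _)]
  refine ENNReal.ofReal_le_ofReal ?_
  have ht0 : 0 < t := ht
  have a1 : |c * (Real.exp (-t) * -1)| = c * Real.exp (-t) := by
    rw [mul_neg_one, mul_neg, abs_neg, abs_of_pos (by positivity)]
  have a2 : Real.log (1 / (c * Real.exp (-t))) - B = t := by
    rw [one_div, Real.log_inv, Real.log_mul hc.ne' (Real.exp_pos _).ne', Real.log_exp, c, Real.log_exp]
    ring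
  have a3 : 1 - H * (c * Real.exp (-t)) ≤ Real.exp (-H * (c * Real.exp (-t))) := by
    have := Real.add_one_le_exp (-H * (c * Real.exp (-t)))
    linarith
  rw [a1, a2]
  have a4 : Real.exp (-(2 * t)) = Real.exp (-t) * Real.exp (-t) := by
    rw [← Real.exp_add]; congr 1; ring
  calc F t = c * Real.exp (-t) * (t ^ i / i.factorial * (1 - H * (c * Real.exp (-t)))) := by
        simp only [F, a4, one_mul]; ring
    _ ≤ _ := by gcongr

lemma P_pow {u : ℝ} (hu : 0 < u) {k : ℕ} (hk : 1 ≤ k) :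
    Real.log (1 + 1 / u) ^ k ≤ (2 * k : ℝ) ^ k * (1 + u ^ (-(1 / 2) : ℝ)) := by
  have hk0 : (0 : ℝ) < k := by exact_mod_cast hk
  have hx : 0 ≤ 1 + 1 / u := by positivity
  have h1 := Real.log_le_rpow_div hx (ε := 1 / (2 * k)) (by positivity)
  have h0 : 0 ≤ Real.log (1 + 1 / u) := Real.log_nonneg (by
    have : 0 < 1 / u := by positivity
    linarith)
  have h2 : Real.log (1 + 1 / u) ≤ 2 * k * (1 + 1 / u) ^ (1 / (2 * k) : ℝ) := by
    refine h1.trans (le_of_eq ?_)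
    field_simp
  refine (pow_le_pow_left₀ h0 h2 k).trans ?_
  rw [mul_pow]
  gcongr
  rw [← Real.rpow_natCast, ← Real.rpow_mul hx]
  have e : 1 / (2 * (k : ℝ)) * k = 1 / 2 := by field_simp
  rw [e, ← Real.sqrt_eq_rpow, Real.rpow_neg hu.le, ← Real.sqrt_eq_rpow, Real.sqrt_le_iff]
  have hs : 0 < √u := Real.sqrt_pos.2 hu
  refine ⟨by positivity, ?_⟩
  have : (√u)⁻¹ ^ 2 = 1 / u := by rw [inv_pow, Real.sq_sqrt hu.le, one_div]
  have : 0 < (√u)⁻¹ := by positivity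
  nlinarith

lemma fin1 {k : ℕ} (hk : 1 ≤ k) :
    ∑' a : almostPrimes k, ENNReal.ofReal (1 / ((a : ℝ) * (Real.log a + 1))) ≠ ⊤ := by
  have e1 : ∑' a : almostPrimes k, ENNReal.ofReal (1 / ((a : ℝ) * (Real.log a + 1))) =
      ∫⁻ u in Set.Ioi (0 : ℝ), (∑' r : almostPrimes k, w u r) * ENNReal.ofReal (Real.exp (-1 * u)) := by
    simp only [← ENNReal.tsum_mul_right]
    rw [lintegral_tsum]
    · exact tsum_congr fun r => term_eq r.2.1.ne' one_pos
    · intro r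
      have := w_meas r
      exact Measurable.aemeasurable (by fun_prop)
  rw [e1]
  have i1 := Real.GammaIntegral_convergent (s := 1) one_pos
  have i2 := Real.GammaIntegral_convergent (s := 1 / 2) (by norm_num)
  have i3 : IntegrableOn (fun u : ℝ => (2 * k : ℝ) ^ k *
      (Real.exp (-u) * u ^ ((1 : ℝ) - 1) + Real.exp (-u) * u ^ ((1 / 2 : ℝ) - 1))) (Set.Ioi 0) :=
    (i1.add i2).const_mul _
  refine ne_top_of_le_ne_top i3.lintegral_lt_top.ne ?_
  refine setLIntegral_mono' measurableSet_Ioi fun u hu => ?_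
  have hu0 : (0 : ℝ) < u := hu
  have h0 : 0 ≤ Real.log (1 + 1 / u) := Real.log_nonneg (by
    have : 0 < 1 / u := by positivity
    linarith)
  calc (∑' r : almostPrimes k, w u r) * ENNReal.ofReal (Real.exp (-1 * u))
      ≤ (ENNReal.ofReal (Real.log (1 + 1 / u))) ^ k * ENNReal.ofReal (Real.exp (-1 * u)) := by
        gcongr
        refine (APhi u k).trans ?_
        gcongr
        exact P_hi hu0
    _ = ENNReal.ofReal (Real.log (1 + 1 / u) ^ k * Real.exp (-1 * u)) := by
        rw [← ENNReal.ofReal_pow h0, ENNReal.ofReal_mul (by positivity)]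
    _ ≤ _ := by
        refine ENNReal.ofReal_le_ofReal ?_
        have h1 := P_pow hu0 hk
        have h2 : (0 : ℝ) < Real.exp (-1 * u) := Real.exp_pos _
        have e2 : (1 / 2 : ℝ) - 1 = -(1 / 2) := by norm_num
        rw [e2, sub_self, Real.rpow_zero, ← neg_one_mul u]
        nlinarith

lemma fin0 {k : ℕ} (hk : 1 ≤ k) {h : ℝ} (h0 : 0 ≤ h) :
    ∑' a : almostPrimes k, ENNReal.ofReal (1 / ((a : ℝ) * (Real.log a + h))) ≠ ⊤ := by
  refine ne_top_of_le_ne_top (ENNReal.mul_ne_top (a := ENNReal.ofReal 3) ENNReal.ofReal_ne_top (fin1 hk)) ?_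
  rw [← ENNReal.tsum_mul_left]
  refine ENNReal.tsum_le_tsum fun a => ?_
  rw [← ENNReal.ofReal_mul (by norm_num)]
  refine ENNReal.ofReal_le_ofReal ?_
  have ha := mem_AP.1 a.2
  have h2 : 2 ≤ a.1 := by
    have : 0 < Ω a.1 := by omega
    have := ArithmeticFunction.cardFactors_pos_iff_one_lt.1 this
    omega
  have h2' : (2 : ℝ) ≤ a.1 := by exact_mod_cast h2
  have hl : 1 / 2 ≤ Real.log a.1 := by
    have h3 := Real.log_le_log (by norm_num) h2'
    have := Real.log_two_gt_d9
    linarith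
  rw [mul_one_div, div_le_div_iff₀ (by positivity) (by positivity)]
  nlinarith

/-- fibers -/
def D (k m : ℕ) : Set ℕ := {r | r ≠ 0 ∧ Ω m + Ω r = k ∧ ∀ p, p.Prime → p ∣ r → 37 ≤ p}

lemma D_eq {k m : ℕ} (h : Ω m ≤ k) : D k m = R (k - Ω m) := by
  ext r
  simp only [D, R, Set.mem_ofPred_eq]
  have : Ω m + Ω r = k ↔ Ω r = k - Ω m := by omega
  rw [this]

lemma cop {m r : ℕ} (hm : m ∈ Nat.smoothNumbers 37) (hr : ∀ p, p.Prime → p ∣ r → 37 ≤ p) :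
    Nat.Coprime m r := by
  refine Nat.coprime_of_dvd fun p hp h1 h2 => ?_
  have := Nat.mem_smoothNumbers'.1 hm p hp h1
  have := hr p hp h2
  omega

lemma split (k : ℕ) (g : ℕ → ℝ≥0∞) :
    ∑' m : Nat.smoothNumbers 37, ∑' r : D k m, g (m * r) ≤ ∑' a : almostPrimes k, g a := by
  let φ : (Σ m : Nat.smoothNumbers 37, D k m) → almostPrimes k := fun x =>
    ⟨x.1.1 * x.2.1, by
      have hm := Nat.ne_zero_of_mem_smoothNumbers x.1.2
      rw [mem_AP]
      refine ⟨mul_ne_zero hm x.2.2.1, ?_⟩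
      rw [ArithmeticFunction.cardFactors_mul hm x.2.2.1]
      exact x.2.2.2.1⟩
  have hφ : Function.Injective φ := by
    rintro ⟨⟨m, hm⟩, ⟨r, hr⟩⟩ ⟨⟨m', hm'⟩, ⟨r', hr'⟩⟩ h
    have h' : m * r = m' * r' := congrArg Subtype.val h
    have hmm : m = m' := by
      refine Nat.dvd_antisymm ?_ ?_
      · exact (cop hm hr'.2.2).dvd_of_dvd_mul_right (h' ▸ dvd_mul_right m r)
      · exact (cop hm' hr.2.2).dvd_of_dvd_mul_right (h'.symm ▸ dvd_mul_right m' r')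
    subst hmm
    have : r = r' := Nat.eq_of_mul_eq_mul_left
      (Nat.pos_of_ne_zero (Nat.ne_zero_of_mem_smoothNumbers hm)) h'
    subst this
    rfl
  refine le_trans (le_of_eq ?_) (ENNReal.tsum_comp_le_tsum_of_injective hφ (fun a => g a))
  exact (ENNReal.tsum_sigma (fun (m : Nat.smoothNumbers 37) (r : D k m) => g (m * r))).symm

lemma log_smooth {m : ℕ} (hm : m ∈ Nat.smoothNumbers 37) : Real.log m ≤ 4 * Ω m := by
  have h0 := Nat.ne_zero_of_mem_smoothNumbers hm
  have h1 : m ≤ 37 ^ Ω m := by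
    rw [ArithmeticFunction.cardFactors_apply]
    conv_lhs => rw [← Nat.prod_primeFactorsList h0]
    exact List.prod_le_pow_card _ _ fun p hp => (hm.2 p hp).le
  have h2 : (m : ℝ) ≤ 37 ^ Ω m := by exact_mod_cast h1
  have h3 := Real.log_le_log (by positivity) h2
  rw [Real.log_pow] at h3
  have h4 : Real.log 37 ≤ 4 := by
    rw [Real.log_le_iff_le_exp (by norm_num)]
    have := Real.exp_one_gt_d9
    have e : Real.exp 4 = Real.exp 1 ^ 4 := by rw [← Real.exp_nat_mul]; norm_num
    rw [e]
    calc (37 : ℝ) ≤ 2.7 ^ 4 := by norm_num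
      _ ≤ _ := by gcongr; linarith
  nlinarith [(Ω m).cast_nonneg (α := ℝ)]

lemma B_nonneg : 0 ≤ B := by
  unfold B
  refine add_nonneg (sum_nonneg fun p hp => ?_) (by norm_num)
  have h2 : (2 : ℝ) ≤ p := by exact_mod_cast (Nat.mem_primesBelow.1 hp).2.two_le
  have h4 : 1 / (p : ℝ) < 1 := by rw [div_lt_one (by linarith)]; linarith
  have h5 : 0 < 1 / (p : ℝ) := by positivity
  have := Real.log_nonpos (x := 1 - 1 / (p : ℝ)) (by linarith) (by linarith)
  linarith

lemma c_le : c ≤ 1 := by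
  unfold c
  rw [Real.exp_le_one_iff]
  linarith [B_nonneg]

lemma c_eq : c = (∏ p ∈ Nat.primesBelow 37, (1 - 1 / (p : ℝ))) * Real.exp (-(1 / 72)) := by
  unfold c B
  rw [neg_add, Real.exp_add, ← sum_neg_distrib, Real.exp_sum]
  congr 1
  refine prod_congr rfl fun p hp => ?_
  have h2 : (2 : ℝ) ≤ p := by exact_mod_cast (Nat.mem_primesBelow.1 hp).2.two_le
  have h4 : 1 / (p : ℝ) < 1 := by rw [div_lt_one (by linarith)]; linarith
  rw [neg_neg, Real.exp_log (by linarith)]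

/-- `z^Ω(n)/n` -/
noncomputable def fz (z : ℝ) : ℕ →* ℝ where
  toFun n := z ^ Ω n / n
  map_one' := by simp
  map_mul' a b := by
    rcases eq_or_ne a 0 with rfl | ha
    · simp
    rcases eq_or_ne b 0 with rfl | hb
    · simp
    rw [ArithmeticFunction.cardFactors_mul ha hb, pow_add]
    push_cast
    field_simp

lemma fz_sum {z : ℝ} (h0 : 0 ≤ z) (h2 : z < 2) :
    HasSum (fun m : Nat.smoothNumbers 37 => z ^ Ω (m : ℕ) / ((m : ℕ) : ℝ))
      (∏ p ∈ Nat.primesBelow 37, (1 - z / (p : ℝ))⁻¹) := by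
  have hval : ∀ {p : ℕ}, p.Prime → fz z p = z / p := fun {p} hp => by
    show z ^ Ω p / (p : ℝ) = z / p
    rw [ArithmeticFunction.cardFactors_eq_one_iff_prime.2 hp, pow_one]
  have := (EulerProduct.summable_and_hasSum_smoothNumbers_prod_primesBelow_geometric (f := fz z)
    (fun {p} hp => by
      have hp2 : (2 : ℝ) ≤ p := by exact_mod_cast hp.two_le
      rw [hval hp, Real.norm_of_nonneg (by positivity), div_lt_one (by linarith)]
      linarith) 37).2
  have e : ∏ p ∈ Nat.primesBelow 37, (1 - fz z p)⁻¹ = ∏ p ∈ Nat.primesBelow 37, (1 - z / (p : ℝ))⁻¹ :=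
    prod_congr rfl fun p hp => by rw [hval (Nat.mem_primesBelow.1 hp).2]
  rw [e] at this
  exact this

lemma main_lo (k : ℕ) :
    ENNReal.ofReal (c * (∏ p ∈ Nat.primesBelow 37, (1 - 1 / (p : ℝ))⁻¹) -
      c * (2 * k + 1) / 1.8 ^ k * ∏ p ∈ Nat.primesBelow 37, (1 - 1.8 / (p : ℝ))⁻¹) ≤
    ∑' a : almostPrimes k, ENNReal.ofReal (1 / ((a : ℝ) * (Real.log a + 1.05))) := by
  have hc := c_pos
  refine le_trans ?_ (split k (fun a => ENNReal.ofReal (1 / ((a : ℝ) * (Real.log a + 1.05)))))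
  have hs := ((fz_sum (z := 1) (by norm_num) (by norm_num)).mul_left c).sub
    ((fz_sum (z := 1.8) (by norm_num) (by norm_num)).mul_left (c * (2 * k + 1) / 1.8 ^ k))
  rw [← hs.tsum_eq]
  refine (ofReal_tsum_le hs.summable).trans ?_
  refine ENNReal.tsum_le_tsum fun m => ?_
  obtain ⟨m, hm⟩ := m
  have hm0 := Nat.ne_zero_of_mem_smoothNumbers hm
  have hmp : (0 : ℝ) < m := by positivity
  have hm1 : (1 : ℝ) ≤ m := by exact_mod_cast Nat.one_le_iff_ne_zero.2 hm0
  have hlog := Real.log_nonneg hm1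
  simp only [one_pow]
  rcases le_or_gt (Ω m) k with hk | hk
  · rw [D_eq hk]
    set i := k - Ω m with hi
    have e : ∀ r : R i, ENNReal.ofReal (1 / (((m * r : ℕ) : ℝ) * (Real.log (m * r : ℕ) + 1.05))) =
        ENNReal.ofReal (1 / (m : ℝ)) *
          ENNReal.ofReal (1 / ((r : ℝ) * (Real.log r + (Real.log m + 1.05)))) := by
      intro r
      have hr0 : ((r : ℕ) : ℝ) ≠ 0 := by exact_mod_cast r.2.1
      rw [← ENNReal.ofReal_mul (by positivity)]
      congr 1
      push_cast
      rw [Real.log_mul hmp.ne' hr0, one_div_mul_one_div, ← mul_assoc]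
      congr 2
      ring
    simp only [e]
    rw [ENNReal.tsum_mul_left]
    refine le_trans ?_ (mul_le_mul_right (rough_lo i (H := Real.log m + 1.05) (by positivity)) _)
    rw [← ENNReal.ofReal_mul (by positivity)]
    refine ENNReal.ofReal_le_ofReal ?_
    have hkk : k = i + Ω m := by omega
    have h1 : Real.log m ≤ 4 * k := by
      have := log_smooth hm
      have h2 : (Ω m : ℝ) ≤ k := by exact_mod_cast hk
      linarith
    have h3 : (Real.log m + 1.05) * c * (1 / 2) ^ (i + 1) ≤ (2 * k + 1) * (1 / 1.8) ^ i := by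
      calc (Real.log m + 1.05) * c * (1 / 2) ^ (i + 1) ≤ (4 * k + 1.05) * 1 * (1 / 2) ^ (i + 1) := by
            have := c_le
            gcongr
        _ = (2 * k + 0.525) * (1 / 2) ^ i := by rw [pow_succ]; ring
        _ ≤ (2 * k + 1) * (1 / 1.8) ^ i := by
            gcongr <;> norm_num
    have h4 : c * (2 * k + 1) / 1.8 ^ k * (1.8 ^ Ω m / (m : ℝ)) =
        1 / (m : ℝ) * (c * ((2 * k + 1) * (1 / 1.8) ^ i)) := by
      have : (1.8 : ℝ) ^ k = 1.8 ^ i * 1.8 ^ Ω m := by rw [← pow_add, ← hkk]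
      rw [this, one_div_pow]
      field_simp
    rw [h4]
    calc c * (1 / (m : ℝ)) - 1 / (m : ℝ) * (c * ((2 * k + 1) * (1 / 1.8) ^ i))
        = 1 / (m : ℝ) * (c * (1 - (2 * k + 1) * (1 / 1.8) ^ i)) := by ring
      _ ≤ _ := by gcongr
  · have hneg : c * (1 / (m : ℝ)) - c * (2 * k + 1) / 1.8 ^ k * (1.8 ^ Ω m / (m : ℝ)) ≤ 0 := by
      have h1 : (1.8 : ℝ) ^ k ≤ 1.8 ^ Ω m := pow_le_pow_right₀ (by norm_num) hk.le
      have h2 : (1 : ℝ) ≤ 1.8 ^ Ω m / 1.8 ^ k := by rwa [one_le_div (by positivity)]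
      have h3 : c * (2 * k + 1) / 1.8 ^ k * (1.8 ^ Ω m / (m : ℝ)) =
        c * (1 / (m : ℝ)) * ((2 * k + 1) * (1.8 ^ Ω m / 1.8 ^ k)) := by ring
      have h4 : (1 : ℝ) ≤ (2 * k + 1) * (1.8 ^ Ω m / 1.8 ^ k) := by
        have : (0 : ℝ) ≤ k := by positivity
        nlinarith
      have h5 : 0 < c * (1 / (m : ℝ)) := by positivity
      rw [h3]
      nlinarith
    rw [ENNReal.ofReal_of_nonpos hneg]
    exact zero_le

lemma kbound {k : ℕ} (hk : 21 ≤ k) : ((2 * k + 1 : ℝ)) / 1.8 ^ k ≤ 0.0002 := by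
  rw [div_le_iff₀ (by positivity)]
  induction k, hk using Nat.le_induction with
  | base => norm_num
  | succ k hk ih =>
    rw [pow_succ]
    have : (21 : ℝ) ≤ k := by exact_mod_cast hk
    push_cast
    nlinarith

lemma pb : Nat.primesBelow 37 = {2, 3, 5, 7, 11, 13, 17, 19, 23, 29, 31} := by decide +kernel

lemma prods : (∏ p ∈ Nat.primesBelow 37, (1 - 1 / (p : ℝ))) *
    ∏ p ∈ Nat.primesBelow 37, (1 - 1.8 / (p : ℝ))⁻¹ ≤ 18 := by
  rw [pb, ← prod_mul_distrib]
  norm_num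

lemma final_num {k : ℕ} (hk : 21 ≤ k) : 0.98 <
    c * (∏ p ∈ Nat.primesBelow 37, (1 - 1 / (p : ℝ))⁻¹) -
      c * (2 * k + 1) / 1.8 ^ k * ∏ p ∈ Nat.primesBelow 37, (1 - 1.8 / (p : ℝ))⁻¹ := by
  have h1 := kbound hk
  have h2 := prods
  have hA : 0 < ∏ p ∈ Nat.primesBelow 37, (1 - 1 / (p : ℝ)) := by
    rw [pb]; norm_num
  set A := ∏ p ∈ Nat.primesBelow 37, (1 - 1 / (p : ℝ)) with hAd
  have hB : 0 < ∏ p ∈ Nat.primesBelow 37, (1 - 1.8 / (p : ℝ))⁻¹ := by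
    rw [pb]; norm_num
  set E := ∏ p ∈ Nat.primesBelow 37, (1 - 1.8 / (p : ℝ))⁻¹
  have e1 : ∏ p ∈ Nat.primesBelow 37, (1 - 1 / (p : ℝ))⁻¹ = A⁻¹ := by rw [hAd, prod_inv_distrib]
  rw [e1, c_eq, ← hAd]
  have he : 1 - 1 / 72 ≤ Real.exp (-(1 / 72)) := by
    have := Real.add_one_le_exp (-(1 / 72) : ℝ); linarith
  set x := Real.exp (-(1 / 72))
  have e2 : A * x * A⁻¹ - A * x * (2 * k + 1) / 1.8 ^ k * E =
      x * (1 - (A * E) * ((2 * k + 1) / 1.8 ^ k)) := by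
    field_simp
  rw [e2]
  have h3 : (A * E) * ((2 * k + 1) / 1.8 ^ k) ≤ 18 * 0.0002 := by
    gcongr
  nlinarith

end S19

/-- For every integer `k ≥ 21` and every real `0 ≤ h ≤ 1.05`,
`f(N_k,h) > 0.98`. -/
theorem stmt_19 (k : ℕ) (hk : 21 ≤ k) (h : ℝ) (h0 : 0 ≤ h) (h1 : h ≤ 1.05) :
    0.98 < transSum (almostPrimes k) h := by
  have hfin := S19.fin0 (k := k) (by omega) h0
  have hlo := S19.main_lo k
  have hnum := S19.final_num hk
  have hmono : ∑' a : almostPrimes k, ENNReal.ofReal (1 / ((a : ℝ) * (Real.log a + 1.05))) ≤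
      ∑' a : almostPrimes k, ENNReal.ofReal (1 / ((a : ℝ) * (Real.log a + h))) := by
    refine ENNReal.tsum_le_tsum fun a => ENNReal.ofReal_le_ofReal ?_
    have ha := S19.mem_AP.1 a.2
    have h2 : 1 < a.1 := ArithmeticFunction.cardFactors_pos_iff_one_lt.1 (by omega)
    have h2' : (1 : ℝ) < a.1 := by exact_mod_cast h2
    have hl : 0 < Real.log a.1 := Real.log_pos h2'
    gcongr
  have hnn : ∀ a : almostPrimes k, 0 ≤ 1 / ((a : ℝ) * (Real.log a + h)) := fun a => by
    have ha : (1 : ℝ) ≤ a.1 := by exact_mod_cast a.2.1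
    have := Real.log_nonneg ha
    positivity
  have heq : transSum (almostPrimes k) h =
      (∑' a : almostPrimes k, ENNReal.ofReal (1 / ((a : ℝ) * (Real.log a + h)))).toReal := by
    rw [ENNReal.tsum_toReal_eq (fun a => ENNReal.ofReal_ne_top)]
    exact tsum_congr fun a => (ENNReal.toReal_ofReal (hnn a)).symm
  rw [heq]
  refine lt_of_lt_of_le hnum ?_
  rw [← ENNReal.ofReal_le_iff_le_toReal hfin]
  exact hlo.trans hmono
end
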